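/- arXiv:1912.03398 — 4 statements merged into one kernel-verified Lean document; each statement's English description precedes it below -/
import Mathlib

section
/- For every positive integer m, the quotient group G_m = U/N_m is a solvable group (of order 1024 m^2). -/
/-- The defining relators of the group `U` on generators `a, b, c` (indexed `0, 1, 2`):
`a^4, b^4, c^4, (ab)^2, (bc)^2, (abc)^2, (a^2b^2)^4, a^2c^2b^2(ac)^2, [a,c⁻¹]b^2`,
where `[x,y] = x⁻¹y⁻¹xy`. -/
def Urels : Set (FreeGroup (Fin 3)) :=
  {(FreeGroup.of 0) ^ 4, (FreeGroup.of 1) ^ 4, (FreeGroup.of 2) ^ 4,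
   (FreeGroup.of 0 * FreeGroup.of 1) ^ 2,
   (FreeGroup.of 1 * FreeGroup.of 2) ^ 2,
   (FreeGroup.of 0 * FreeGroup.of 1 * FreeGroup.of 2) ^ 2,
   ((FreeGroup.of 0) ^ 2 * (FreeGroup.of 1) ^ 2) ^ 4,
   (FreeGroup.of 0) ^ 2 * (FreeGroup.of 2) ^ 2 * (FreeGroup.of 1) ^ 2 *
     (FreeGroup.of 0 * FreeGroup.of 2) ^ 2,
   (FreeGroup.of 0)⁻¹ * FreeGroup.of 2 * FreeGroup.of 0 * (FreeGroup.of 2)⁻¹ *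
     (FreeGroup.of 1) ^ 2}

/-- The finitely presented group `U`. -/
abbrev UGroup : Type := PresentedGroup Urels

/-- The generator `a` of `U`. -/
def Ua : UGroup := PresentedGroup.of 0

/-- The generator `b` of `U`. -/
def Ub : UGroup := PresentedGroup.of 1

/-- The generator `c` of `U`. -/
def Uc : UGroup := PresentedGroup.of 2

/-- The element `x = (ac⁻¹)^4` of `U`. -/
def Ux : UGroup := (Ua * Uc⁻¹) ^ 4

/-- The element `y = (c⁻¹a)^4` of `U`. -/
def Uy : UGroup := (Uc⁻¹ * Ua) ^ 4

/-- The subgroup `N_m = ⟨x^m, y^m⟩` of `U`. -/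
def UN (m : ℕ) : Subgroup UGroup := Subgroup.closure {Ux ^ m, Uy ^ m}

def ta : Fin 32 → Fin 32 :=
  ![1, 6, 0, 5, 7, 18, 2, 19, 4, 3, 13, 10, 15, 14, 11, 31, 27, 26, 9, 8, 25, 17, 20, 21, 16, 29, 23, 30, 12, 22, 24, 28]

def tb : Fin 32 → Fin 32 :=
  ![0, 2, 4, 1, 3, 8, 9, 6, 11, 12, 19, 17, 7, 16, 22, 18, 23, 5, 21, 28, 13, 24, 25, 20, 15, 26, 14, 10, 27, 29, 31, 30]

def tc : Fin 32 → Fin 32 :=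
  ![0, 1, 3, 27, 10, 8, 7, 12, 5, 20, 4, 17, 13, 6, 15, 21, 9, 11, 26, 2, 23, 25, 22, 16, 24, 14, 18, 19, 28, 29, 30, 31]

theorem coset_table {X : Type*} (a b c : X → X)
    (r0 : ∀ z, a (a (a (a z))) = z)
    (r1 : ∀ z, b (b (b (b z))) = z)
    (r2 : ∀ z, c (c (c (c z))) = z)
    (r3 : ∀ z, a (b (a (b z))) = z)
    (r4 : ∀ z, b (c (b (c z))) = z)
    (r5 : ∀ z, a (b (c (a (b (c z))))) = z)
    (r6 : ∀ z, a (a (b (b (a (a (b (b (a (a (b (b (a (a (b (b z))))))))))))))) = z)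
    (r7 : ∀ z, a (a (c (c (b (b (a (c (a (c z))))))))) = z)
    (r8 : ∀ z, a (a (a (c (a (c (c (c (b (b z))))))))) = z)
    (p0 : X) (fb0 : b p0 = p0) (fc0 : c p0 = p0) :
    ∃ p : Fin 32 → X, p 0 = p0 ∧ ∀ i, a (p i) = p (ta i) ∧ b (p i) = p (tb i) ∧ c (p i) = p (tc i) := by
  have ia : Function.Injective a := fun u v h => by rw [← r0 u, ← r0 v, h]
  have ib : Function.Injective b := fun u v h => by rw [← r1 u, ← r1 v, h]
  have ic : Function.Injective c := fun u v h => by rw [← r2 u, ← r2 v, h]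
  have r3_1 := fun z => ia (r3 (a z))
  have r4_1 := fun z => ib (r4 (b z))
  have r5_1 := fun z => ia (r5 (a z))
  have r5_2 := fun z => ib (r5_1 (b z))
  have r7_1 := fun z => ia (r7 (a z))
  have r7_2 := fun z => ia (r7_1 (a z))
  have r7_3 := fun z => ic (r7_2 (c z))
  have r7_4 := fun z => ic (r7_3 (c z))
  have r7_5 := fun z => ib (r7_4 (b z))
  have r7_6 := fun z => ib (r7_5 (b z))
  have r7_7 := fun z => ia (r7_6 (a z))
  have r8_1 := fun z => ia (r8 (a z))
  have r8_2 := fun z => ia (r8_1 (a z))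
  have r8_3 := fun z => ia (r8_2 (a z))
  have r8_4 := fun z => ic (r8_3 (c z))
  have r8_5 := fun z => ia (r8_4 (a z))
  have r8_6 := fun z => ic (r8_5 (c z))
  have r8_7 := fun z => ic (r8_6 (c z))
  obtain ⟨p1, fa0⟩ : ∃ z, a p0 = z := ⟨_, rfl⟩
  obtain ⟨p2, fb1⟩ : ∃ z, b p1 = z := ⟨_, rfl⟩
  have fa2 : a p2 = p0 := by simpa only [fb0, fa0, fb1] using r3 p0
  have fc1 : c p1 = p1 := by simpa only [fb1, fa2, fc0, fb0, fa0] using r5_2 p1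
  obtain ⟨p3, fc2⟩ : ∃ z, c p2 = z := ⟨_, rfl⟩
  have fb3 : b p3 = p1 := by simpa only [fc1, fb1, fc2] using r4 p1
  obtain ⟨p4, fb2⟩ : ∃ z, b p2 = z := ⟨_, rfl⟩
  have fb4 : b p4 = p3 := by simpa only [fb3, fb1, fb2] using r1 p3
  obtain ⟨p5, fa3⟩ : ∃ z, a p3 = z := ⟨_, rfl⟩
  obtain ⟨p6, fa1⟩ : ∃ z, a p1 = z := ⟨_, rfl⟩
  have fa6 : a p6 = p2 := by simpa only [fa2, fa0, fa1] using r0 p2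
  obtain ⟨p7, fc6⟩ : ∃ z, c p6 = z := ⟨_, rfl⟩
  have fb7 : b p7 = p6 := by simpa only [fa6, fc2, fb3, fa1, fc6] using r5_1 p6
  have fa4 : a p4 = p7 := by simpa only [fb7, fa6, fb2] using r3 p7
  obtain ⟨p8, fb5⟩ : ∃ z, b p5 = z := ⟨_, rfl⟩
  have fa8 : a p8 = p4 := by simpa only [fb4, fa3, fb5] using r3 p4
  have fc5 : c p5 = p8 := by simpa only [fa8, fb4, fb3, fc1, fa1, fa6, fc2, fa3] using r7_7 p8
  obtain ⟨p9, fb6⟩ : ∃ z, b p6 = z := ⟨_, rfl⟩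
  have fa9 : a p9 = p3 := by simpa only [fb3, fa1, fb6] using r3 p3
  obtain ⟨p10, fc4⟩ : ∃ z, c p4 = z := ⟨_, rfl⟩
  obtain ⟨p11, fb8⟩ : ∃ z, b p8 = z := ⟨_, rfl⟩
  obtain ⟨p12, fc7⟩ : ∃ z, c p7 = z := ⟨_, rfl⟩
  obtain ⟨p13, fa10⟩ : ∃ z, a p10 = z := ⟨_, rfl⟩
  obtain ⟨p14, fa13⟩ : ∃ z, a p13 = z := ⟨_, rfl⟩
  obtain ⟨p15, fc14⟩ : ∃ z, c p14 = z := ⟨_, rfl⟩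
  obtain ⟨p16, fb13⟩ : ∃ z, b p13 = z := ⟨_, rfl⟩
  obtain ⟨p17, fb11⟩ : ∃ z, b p11 = z := ⟨_, rfl⟩
  have fb17 : b p17 = p5 := by simpa only [fb5, fb8, fb11] using r1 p5
  have fc11 : c p11 = p17 := by simpa only [fb17, fc5, fb8] using r4_1 p17
  obtain ⟨p18, fa5⟩ : ∃ z, a p5 = z := ⟨_, rfl⟩
  have fa18 : a p18 = p9 := by simpa only [fa9, fa3, fa5] using r0 p9
  obtain ⟨p19, fa7⟩ : ∃ z, a p7 = z := ⟨_, rfl⟩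
  have fa19 : a p19 = p8 := by simpa only [fa8, fa4, fa7] using r0 p8
  have fc19 : c p19 = p2 := by simpa only [fa2, fb0, fc0, fa0, fa1, fc6, fa7] using r7_7 p2
  have fb10 : b p10 = p19 := by simpa only [fc19, fb2, fc4] using r4 p19
  have fb12 : b p12 = p7 := by simpa only [fa7, fc19, fb2, fa4, fc7] using r5_1 p7
  have fc8 : c p8 = p5 := by simpa only [fb5, fa8, fc4, fb10, fa19] using r5_2 p5
  have fc10 : c p10 = p4 := by simpa only [fa4, fa7, fc19, fa2, fc0, fa0, fb1, fb2, fc4] using r7_2 p4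
  have fa14 : a p14 = p11 := by simpa only [fb11, fb17, fc5, fc8, fa8, fc4, fa10, fa13] using r8 p11
  have fc13 : c p13 = p6 := by simpa only [fa6, fa2, fa0, fb1, fb2, fc4, fc10, fa10] using r8_3 p6
  have fa11 : a p11 = p10 := by simpa only [fa10, fa13, fa14] using r0 p10
  have fb9 : b p9 = p12 := by simpa only [fb12, fb7, fb6] using r1 p12
  have fc12 : c p12 = p13 := by simpa only [fc13, fc6, fc7] using r2 p13
  have fc16 : c p16 = p9 := by simpa only [fb9, fc12, fb13] using r4_1 p9
  have fc17 : c p17 = p11 := by simpa only [fa11, fa10, fc13, fa6, fc2, fa3, fb5, fb8, fc11] using r7_2 p11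
  obtain ⟨p20, fc9⟩ : ∃ z, c p9 = z := ⟨_, rfl⟩
  have fb20 : b p20 = p13 := by simpa only [fc13, fb6, fc9] using r4 p13
  have fb15 : b p15 = p18 := by simpa only [fa18, fc9, fb20, fa13, fc14] using r5_1 p18
  have fa12 : a p12 = p15 := by simpa only [fb15, fa18, fb9] using r3 p15
  obtain ⟨p21, fc15⟩ : ∃ z, c p15 = z := ⟨_, rfl⟩
  have fa21 : a p21 = p17 := by simpa only [fb17, fb5, fc8, fc5, fa8, fa4, fc7, fa12, fc15] using r7_6 p17
  have fb18 : b p18 = p21 := by simpa only [fa21, fb17, fa5] using r3_1 p21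
  obtain ⟨p22, fb14⟩ : ∃ z, b p14 = z := ⟨_, rfl⟩
  have fa22 : a p22 = p20 := by simpa only [fb20, fa13, fb14] using r3 p20
  obtain ⟨p23, fc20⟩ : ∃ z, c p20 = z := ⟨_, rfl⟩
  have fc23 : c p23 = p16 := by simpa only [fc16, fc9, fc20] using r2 p16
  have fa23 : a p23 = p21 := by simpa only [fa21, fc17, fa11, fc10, fa4, fb7, fb6, fc9, fc20] using r7_1 p21
  have fb16 : b p16 = p23 := by simpa only [fc23, fc16, fa9, fa3, fc5, fa8, fc4, fa10, fb13] using r7_4 p23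
  have fb23 : b p23 = p20 := by simpa only [fb20, fb13, fb16] using r1 p20
  obtain ⟨p24, fb21⟩ : ∃ z, b p21 = z := ⟨_, rfl⟩
  have fb24 : b p24 = p15 := by simpa only [fb15, fb18, fb21] using r1 p15
  have fa24 : a p24 = p16 := by simpa only [fb16, fa23, fb21] using r3 p16
  have fc24 : c p24 = p24 := by simpa only [fb24, fc15, fb21] using r4_1 p24
  obtain ⟨p25, fb22⟩ : ∃ z, b p22 = z := ⟨_, rfl⟩
  have fc25 : c p25 = p14 := by simpa only [fc14, fc15, fa21, fc17, fa11, fa10, fa13, fb14, fb22] using r8_7 p14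
  have fc21 : c p21 = p25 := by simpa only [fc25, fc14, fc15] using r2 p25
  have fc22 : c p22 = p22 := by simpa only [fb22, fc25, fb14] using r4_1 p22
  have fa20 : a p20 = p25 := by simpa only [fc25, fb14, fa22, fc20, fb23] using r5 p25
  obtain ⟨p26, fb25⟩ : ∃ z, b p25 = z := ⟨_, rfl⟩
  have fb26 : b p26 = p14 := by simpa only [fb14, fb22, fb25] using r1 p14
  have fa26 : a p26 = p23 := by simpa only [fb23, fa20, fb25] using r3 p23
  have fa17 : a p17 = p26 := by simpa only [fb26, fa14, fb11] using r3 p26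
  have fc26 : c p26 = p18 := by simpa only [fb18, fc21, fb25] using r4_1 p18
  have fc18 : c p18 = p26 := by simpa only [fb26, fc14, fb15] using r4_1 p26
  obtain ⟨p27, fc3⟩ : ∃ z, c p3 = z := ⟨_, rfl⟩
  have fc27 : c p27 = p19 := by simpa only [fc19, fc2, fc3] using r2 p19
  have fb27 : b p27 = p10 := by simpa only [fc10, fb4, fc3] using r4 p10
  have fa16 : a p16 = p27 := by simpa only [fb27, fb10, fa19, fa8, fb4, fb3, fa1, fa6, fb2, fa3, fa5, fb18, fb21, fa24] using r6 p27
  obtain ⟨p28, fb19⟩ : ∃ z, b p19 = z := ⟨_, rfl⟩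
  have fb28 : b p28 = p27 := by simpa only [fb27, fb10, fb19] using r1 p27
  have fa28 : a p28 = p12 := by simpa only [fb12, fa7, fb19] using r3 p12
  have fc28 : c p28 = p28 := by simpa only [fb28, fc27, fb19] using r4_1 p28
  obtain ⟨p29, fa25⟩ : ∃ z, a p25 = z := ⟨_, rfl⟩
  have fa29 : a p29 = p22 := by simpa only [fa22, fa20, fa25] using r0 p22
  have fb29 : b p29 = p29 := by simpa only [fa29, fb22, fa25] using r3_1 p29
  have fc29 : c p29 = p29 := by simpa only [fb29, fa29, fc22, fb22, fa25] using r5_2 p29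
  obtain ⟨p30, fa27⟩ : ∃ z, a p27 = z := ⟨_, rfl⟩
  have fa30 : a p30 = p24 := by simpa only [fa24, fa16, fa27] using r0 p24
  have fc30 : c p30 = p30 := by simpa only [fa30, fb24, fb15, fc18, fc26, fa18, fa9, fc3, fa27] using r7_7 p30
  obtain ⟨p31, fa15⟩ : ∃ z, a p15 = z := ⟨_, rfl⟩
  have fa31 : a p31 = p28 := by simpa only [fa28, fa12, fa15] using r0 p28
  have fb31 : b p31 = p30 := by simpa only [fa30, fb24, fa15] using r3_1 p30
  have fb30 : b p30 = p31 := by simpa only [fa31, fb28, fa27] using r3_1 p31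
  have fc31 : c p31 = p31 := by simpa only [fb31, fc30, fb30] using r4_1 p31
  refine ⟨![p0, p1, p2, p3, p4, p5, p6, p7, p8, p9, p10, p11, p12, p13, p14, p15, p16, p17, p18, p19, p20, p21, p22, p23, p24, p25, p26, p27, p28, p29, p30, p31], rfl, fun i => ?_⟩
  fin_cases i
  exacts [⟨fa0, fb0, fc0⟩, ⟨fa1, fb1, fc1⟩, ⟨fa2, fb2, fc2⟩, ⟨fa3, fb3, fc3⟩, ⟨fa4, fb4, fc4⟩, ⟨fa5, fb5, fc5⟩, ⟨fa6, fb6, fc6⟩, ⟨fa7, fb7, fc7⟩, ⟨fa8, fb8, fc8⟩, ⟨fa9, fb9, fc9⟩, ⟨fa10, fb10, fc10⟩, ⟨fa11, fb11, fc11⟩, ⟨fa12, fb12, fc12⟩, ⟨fa13, fb13, fc13⟩, ⟨fa14, fb14, fc14⟩, ⟨fa15, fb15, fc15⟩, ⟨fa16, fb16, fc16⟩, ⟨fa17, fb17, fc17⟩, ⟨fa18, fb18, fc18⟩, ⟨fa19, fb19, fc19⟩, ⟨fa20, fb20, fc20⟩, ⟨fa21, fb21, fc21⟩, ⟨fa22,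 fb22, fc22⟩, ⟨fa23, fb23, fc23⟩, ⟨fa24, fb24, fc24⟩, ⟨fa25, fb25, fc25⟩, ⟨fa26, fb26, fc26⟩, ⟨fa27, fb27, fc27⟩, ⟨fa28, fb28, fc28⟩, ⟨fa29, fb29, fc29⟩, ⟨fa30, fb30, fc30⟩, ⟨fa31, fb31, fc31⟩]

theorem rel_a4 : Ua ^ 4 = 1 :=
  PresentedGroup.one_of_mem (rels := Urels) (x := (FreeGroup.of 0) ^ 4) (by simp [Urels])

theorem rel_b4 : Ub ^ 4 = 1 :=
  PresentedGroup.one_of_mem (rels := Urels) (x := (FreeGroup.of 1) ^ 4) (by simp [Urels])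

theorem rel_c4 : Uc ^ 4 = 1 :=
  PresentedGroup.one_of_mem (rels := Urels) (x := (FreeGroup.of 2) ^ 4) (by simp [Urels])

theorem rel_ab : (Ua * Ub) ^ 2 = 1 :=
  PresentedGroup.one_of_mem (rels := Urels) (x := (FreeGroup.of 0 * FreeGroup.of 1) ^ 2)
    (by simp [Urels])

theorem rel_bc : (Ub * Uc) ^ 2 = 1 :=
  PresentedGroup.one_of_mem (rels := Urels) (x := (FreeGroup.of 1 * FreeGroup.of 2) ^ 2)
    (by simp [Urels])

theorem rel_abc : (Ua * Ub * Uc) ^ 2 = 1 :=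
  PresentedGroup.one_of_mem (rels := Urels)
    (x := (FreeGroup.of 0 * FreeGroup.of 1 * FreeGroup.of 2) ^ 2) (by simp [Urels])

theorem rel_a2b2 : (Ua ^ 2 * Ub ^ 2) ^ 4 = 1 :=
  PresentedGroup.one_of_mem (rels := Urels)
    (x := ((FreeGroup.of 0) ^ 2 * (FreeGroup.of 1) ^ 2) ^ 4) (by simp [Urels])

theorem rel_8 : Ua ^ 2 * Uc ^ 2 * Ub ^ 2 * (Ua * Uc) ^ 2 = 1 :=
  PresentedGroup.one_of_mem (rels := Urels)
    (x := (FreeGroup.of 0) ^ 2 * (FreeGroup.of 2) ^ 2 * (FreeGroup.of 1) ^ 2 *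
     (FreeGroup.of 0 * FreeGroup.of 2) ^ 2) (by simp [Urels])

theorem rel_9 : Ua⁻¹ * Uc * Ua * Uc⁻¹ * Ub ^ 2 = 1 :=
  PresentedGroup.one_of_mem (rels := Urels)
    (x := (FreeGroup.of 0)⁻¹ * FreeGroup.of 2 * FreeGroup.of 0 * (FreeGroup.of 2)⁻¹ *
     (FreeGroup.of 1) ^ 2) (by simp [Urels])

theorem inv_a : Ua⁻¹ = Ua ^ 3 := inv_eq_of_mul_eq_one_right (by rw [← pow_succ']; exact rel_a4)
theorem inv_b : Ub⁻¹ = Ub ^ 3 := inv_eq_of_mul_eq_one_right (by rw [← pow_succ']; exact rel_b4)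
theorem inv_c : Uc⁻¹ = Uc ^ 3 := inv_eq_of_mul_eq_one_right (by rw [← pow_succ']; exact rel_c4)

/-- `U` is generated by `a, b, c` as a monoid. -/
theorem U_ind (Q : UGroup → Prop) (h1 : Q 1) (ha : ∀ u, Q u → Q (Ua * u))
    (hb : ∀ u, Q u → Q (Ub * u)) (hc : ∀ u, Q u → Q (Uc * u)) (u : UGroup) : Q u := by
  have hu : u ∈ Subgroup.closure (Set.range (PresentedGroup.of (rels := Urels))) := by
    rw [PresentedGroup.closure_range_of]; trivial
  have key : ∀ (g v : UGroup), (∀ u, Q u → Q (g * u)) → Q v → Q (g ^ 3 * v) := by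
    intro g v hg hv
    have e : g ^ 3 * v = g * (g * (g * v)) := by simp only [pow_succ, pow_zero, one_mul, mul_assoc]
    rw [e]; exact hg _ (hg _ (hg _ hv))
  induction hu using Subgroup.closure_induction_left with
  | one => exact h1
  | mul_left x hx y hy ih =>
    obtain ⟨i, rfl⟩ := hx
    fin_cases i
    · exact ha _ ih
    · exact hb _ ih
    · exact hc _ ih
  | inv_mul_cancel x hx y hy ih =>
    obtain ⟨i, rfl⟩ := hx
    fin_cases i
    · change Q (Ua⁻¹ * y); rw [inv_a]; exact key _ _ ha ih
    · change Q (Ub⁻¹ * y); rw [inv_b]; exact key _ _ hb ih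
    · change Q (Uc⁻¹ * y); rw [inv_c]; exact key _ _ hc ih

/-- Homomorphisms out of `U`. -/
theorem U_hom {G : Type*} [Group G] (a b c : G) (h1 : a ^ 4 = 1) (h2 : b ^ 4 = 1) (h3 : c ^ 4 = 1)
    (h4 : (a * b) ^ 2 = 1) (h5 : (b * c) ^ 2 = 1) (h6 : (a * b * c) ^ 2 = 1)
    (h7 : (a ^ 2 * b ^ 2) ^ 4 = 1) (h8 : a ^ 2 * c ^ 2 * b ^ 2 * (a * c) ^ 2 = 1)
    (h9 : a⁻¹ * c * a * c⁻¹ * b ^ 2 = 1) :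
    ∃ f : UGroup →* G, f Ua = a ∧ f Ub = b ∧ f Uc = c := by
  have h : ∀ r ∈ Urels, FreeGroup.lift ![a, b, c] r = 1 := by
    intro r hr
    simp only [Urels, Set.mem_insert_iff, Set.mem_singleton_iff] at hr
    rcases hr with rfl | rfl | rfl | rfl | rfl | rfl | rfl | rfl | rfl <;>
      simpa using by assumption
  exact ⟨PresentedGroup.toGroup h, PresentedGroup.toGroup.of h, PresentedGroup.toGroup.of h,
    PresentedGroup.toGroup.of h⟩

def permOf (f : Fin 32 → Fin 32) (h : ∀ i, f (f (f (f i))) = i) : Equiv.Perm (Fin 32) where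
  toFun := f
  invFun := fun i => f (f (f i))
  left_inv := h
  right_inv := h

set_option maxRecDepth 100000 in
theorem exists_rho : ∃ f : UGroup →* Equiv.Perm (Fin 32),
    (∀ i, f Ua i = ta i) ∧ (∀ i, f Ub i = tb i) ∧ (∀ i, f Uc i = tc i) := by
  obtain ⟨f, h1, h2, h3⟩ := U_hom (permOf ta (by decide)) (permOf tb (by decide))
    (permOf tc (by decide)) (Equiv.ext (by decide)) (Equiv.ext (by decide)) (Equiv.ext (by decide))
    (Equiv.ext (by decide)) (Equiv.ext (by decide)) (Equiv.ext (by decide)) (Equiv.ext (by decide))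
    (Equiv.ext (by decide)) (Equiv.ext (by decide))
  exact ⟨f, fun i => by rw [h1]; rfl, fun i => by rw [h2]; rfl, fun i => by rw [h3]; rfl⟩

def pa : Equiv.Perm (ℤ × ℤ) where
  toFun z := (-z.1, z.2)
  invFun z := (-z.1, z.2)
  left_inv z := by simp
  right_inv z := by simp

def pb : Equiv.Perm (ℤ × ℤ) where
  toFun z := (-z.2, z.1)
  invFun z := (z.2, -z.1)
  left_inv z := by simp
  right_inv z := by simp

def pc : Equiv.Perm (ℤ × ℤ) where
  toFun z := (-z.2 + 1, z.1)
  invFun z := (z.2, -z.1 + 1)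
  left_inv z := by simp
  right_inv z := by simp

theorem pa_apply (z : ℤ × ℤ) : pa z = (-z.1, z.2) := rfl
theorem pb_apply (z : ℤ × ℤ) : pb z = (-z.2, z.1) := rfl
theorem pc_apply (z : ℤ × ℤ) : pc z = (-z.2 + 1, z.1) := rfl
theorem pa_inv (z : ℤ × ℤ) : pa.symm z = (-z.1, z.2) := rfl
theorem pb_inv (z : ℤ × ℤ) : pb.symm z = (z.2, -z.1) := rfl
theorem pc_inv (z : ℤ × ℤ) : pc.symm z = (z.2, -z.1 + 1) := rfl

theorem exists_phi : ∃ f : UGroup →* Equiv.Perm (ℤ × ℤ), f Ua = pa ∧ f Ub = pb ∧ f Uc = pc := by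
  apply U_hom <;> ext z <;>
    simp [pow_succ, pa_apply, pb_apply, pc_apply, pa_inv, pc_inv]

theorem exists_lam : ∃ f : UGroup →* Equiv.Perm (Fin 4),
    f Ub = finRotate 4 ∧ f Uc = finRotate 4 := by
  obtain ⟨f, h1, h2, h3⟩ := U_hom (Equiv.neg (Fin 4)) (finRotate 4) (finRotate 4)
    (by decide) (by decide) (by decide) (by decide) (by decide) (by decide) (by decide) (by decide)
    (by decide)
  exact ⟨f, h2, h3⟩

noncomputable def rho : UGroup →* Equiv.Perm (Fin 32) := exists_rho.choose
theorem rho_a (i : Fin 32) : rho Ua i = ta i := exists_rho.choose_spec.1 i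
theorem rho_b (i : Fin 32) : rho Ub i = tb i := exists_rho.choose_spec.2.1 i
theorem rho_c (i : Fin 32) : rho Uc i = tc i := exists_rho.choose_spec.2.2 i

noncomputable def phi : UGroup →* Equiv.Perm (ℤ × ℤ) := exists_phi.choose
theorem phi_a : phi Ua = pa := exists_phi.choose_spec.1
theorem phi_b : phi Ub = pb := exists_phi.choose_spec.2.1
theorem phi_c : phi Uc = pc := exists_phi.choose_spec.2.2

noncomputable def lam : UGroup →* Equiv.Perm (Fin 4) := exists_lam.choose
theorem lam_b : lam Ub = finRotate 4 := exists_lam.choose_spec.1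
theorem lam_c : lam Uc = finRotate 4 := exists_lam.choose_spec.2

/-- The subgroup generated by `b` and `c`. -/
def UP : Subgroup UGroup := Subgroup.closure {Ub, Uc}

theorem b_mem : Ub ∈ UP := Subgroup.subset_closure (by simp)
theorem c_mem : Uc ∈ UP := Subgroup.subset_closure (by simp)

theorem exists_p : ∃ p : Fin 32 → UGroup ⧸ UP, p 0 = ((1 : UGroup) : UGroup ⧸ UP) ∧
    ∀ (u : UGroup) (i : Fin 32), u • p i = p (rho u i) := by
  have R : ∀ (w : UGroup), w = 1 → ∀ z : UGroup ⧸ UP, w • z = z := by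
    rintro w rfl z; exact one_smul _ z
  have fixed : ∀ g ∈ UP, g • ((1 : UGroup) : UGroup ⧸ UP) = ((1 : UGroup) : UGroup ⧸ UP) := by
    intro g hg
    rw [MulAction.Quotient.smul_coe, smul_eq_mul, mul_one]
    exact (QuotientGroup.eq).2 (by simpa using hg)
  obtain ⟨p, hp0, hp⟩ := coset_table (X := UGroup ⧸ UP) (fun z => Ua • z) (fun z => Ub • z)
    (fun z => Uc • z)
    (fun z => by simpa [pow_succ, mul_smul] using R _ rel_a4 z)
    (fun z => by simpa [pow_succ, mul_smul] using R _ rel_b4 z)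
    (fun z => by simpa [pow_succ, mul_smul] using R _ rel_c4 z)
    (fun z => by simpa [pow_succ, mul_smul] using R _ rel_ab z)
    (fun z => by simpa [pow_succ, mul_smul] using R _ rel_bc z)
    (fun z => by simpa [pow_succ, mul_smul] using R _ rel_abc z)
    (fun z => by simpa [pow_succ, mul_smul] using R _ rel_a2b2 z)
    (fun z => by simpa [pow_succ, mul_smul] using R _ rel_8 z)
    (fun z => by
      have h := rel_9
      rw [inv_a, inv_c] at h
      simpa [pow_succ, mul_smul] using R _ h z)
    ((1 : UGroup) : UGroup ⧸ UP) (fixed _ b_mem) (fixed _ c_mem)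
  refine ⟨p, hp0, fun u => ?_⟩
  induction u using U_ind with
  | h1 => intro i; simp
  | ha u ih => intro i; rw [mul_smul, ih, map_mul, Equiv.Perm.mul_apply, rho_a]; exact (hp _).1
  | hb u ih => intro i; rw [mul_smul, ih, map_mul, Equiv.Perm.mul_apply, rho_b]; exact (hp _).2.1
  | hc u ih => intro i; rw [mul_smul, ih, map_mul, Equiv.Perm.mul_apply, rho_c]; exact (hp _).2.2

theorem rho_inv_a (i : Fin 32) : rho Ua⁻¹ i = ta (ta (ta i)) := by
  rw [inv_a]; simp [pow_succ, rho_a]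
theorem rho_inv_b (i : Fin 32) : rho Ub⁻¹ i = tb (tb (tb i)) := by
  rw [inv_b]; simp [pow_succ, rho_b]
theorem rho_inv_c (i : Fin 32) : rho Uc⁻¹ i = tc (tc (tc i)) := by
  rw [inv_c]; simp [pow_succ, rho_c]

theorem rho_fix {g : UGroup} (hg : g ∈ UP) : rho g 0 = 0 := by
  have : UP ≤ (MulAction.stabilizer (Equiv.Perm (Fin 32)) (0 : Fin 32)).comap rho := by
    rw [UP, Subgroup.closure_le]
    rintro x (rfl | rfl)
    · exact (rho_b 0).trans (by decide)
    · exact (rho_c 0).trans (by decide)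
  exact this hg

theorem mem_of_rho {g : UGroup} (hg : rho g 0 = 0) : g ∈ UP := by
  obtain ⟨p, h0, hp⟩ := exists_p
  have h := hp g 0
  rw [hg, h0, MulAction.Quotient.smul_coe, smul_eq_mul, mul_one] at h
  have h2 := (QuotientGroup.eq).1 h
  simpa using h2

theorem rho_trans (i : Fin 32) : ∃ u, rho u 0 = i := by
  have key : ∀ i : Fin 32, i ≠ 0 → ∃ j : Fin 32, j < i ∧ (ta j = i ∨ tb j = i ∨ tc j = i) := by
    decide
  induction i using WellFoundedLT.induction with
  | ind i ih =>
    by_cases h0 : i = 0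
    · exact ⟨1, by simp [h0]⟩
    · obtain ⟨j, hj, h⟩ := key i h0
      obtain ⟨u, hu⟩ := ih j hj
      rcases h with h | h | h
      · exact ⟨Ua * u, by simp [hu, rho_a, h]⟩
      · exact ⟨Ub * u, by simp [hu, rho_b, h]⟩
      · exact ⟨Uc * u, by simp [hu, rho_c, h]⟩

theorem index_P : UP.index = 32 := by
  obtain ⟨p, h0, hp⟩ := exists_p
  have hb : Function.Bijective p := by
    constructor
    · intro i j hij
      obtain ⟨u, rfl⟩ := rho_trans i
      obtain ⟨v, rfl⟩ := rho_trans j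
      rw [← hp, ← hp, h0, MulAction.Quotient.smul_coe, MulAction.Quotient.smul_coe, smul_eq_mul,
        smul_eq_mul, mul_one, mul_one] at hij
      have h := rho_fix ((QuotientGroup.eq).1 hij)
      rw [map_mul, map_inv, Equiv.Perm.mul_apply, Equiv.Perm.inv_eq_iff_eq] at h
      exact h.symm
    · intro q
      induction q using QuotientGroup.induction_on with
      | H u => exact ⟨rho u 0, by rw [← hp, h0, MulAction.Quotient.smul_coe, smul_eq_mul, mul_one]⟩
  rw [Subgroup.index, ← Nat.card_eq_of_bijective p hb]
  simp

/-! ### The subgroup `P` -/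

def t1 : UGroup := Ub⁻¹ * Uc
def t2 : UGroup := Uc * Ub⁻¹

theorem bcb : Uc * Ub * Uc = Ub⁻¹ := by
  rw [eq_inv_iff_mul_eq_one, mul_eq_one_comm]
  have := rel_bc
  simpa [pow_succ, mul_assoc] using this

theorem cbbc : Ub * Uc * Ub = Uc⁻¹ := by
  rw [eq_inv_iff_mul_eq_one]
  have := rel_bc
  simpa [pow_succ, mul_assoc] using this

theorem t2b : t2 * Ub = Ub * t1 := by simp [t1, t2]

theorem b2inv : Ub⁻¹ * Ub⁻¹ = Ub * Ub := by
  rw [← mul_inv_rev, inv_eq_iff_mul_eq_one]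
  simpa [pow_succ, mul_assoc] using rel_b4

theorem t1b : t1 * Ub = Ub * t2⁻¹ := by
  have h : Uc * Ub = Ub⁻¹ * Uc⁻¹ := by rw [← bcb]; group
  rw [t1, t2, mul_assoc, h, ← mul_assoc, b2inv]; group

theorem t_comm : Commute t1 t2 := by
  have h : Uc * Ub = Ub⁻¹ * Uc⁻¹ := by rw [← bcb]; group
  have c2 : Uc⁻¹ * Uc⁻¹ = Uc * Uc := by
    rw [← mul_inv_rev, inv_eq_iff_mul_eq_one]
    simpa [pow_succ, mul_assoc] using rel_c4
  have h' : Ub * Uc = Uc⁻¹ * Ub⁻¹ := by rw [← cbbc]; group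
  change Ub⁻¹ * Uc * (Uc * Ub⁻¹) = Uc * Ub⁻¹ * (Ub⁻¹ * Uc)
  have e1 : Uc * Ub⁻¹ * (Ub⁻¹ * Uc) = (Uc * Ub) * (Ub * Uc) := by
    rw [show Uc * Ub⁻¹ * (Ub⁻¹ * Uc) = Uc * (Ub⁻¹ * Ub⁻¹) * Uc by group, b2inv]; group
  rw [e1, h, h', show Ub⁻¹ * Uc⁻¹ * (Uc⁻¹ * Ub⁻¹) = Ub⁻¹ * (Uc⁻¹ * Uc⁻¹) * Ub⁻¹ by group, c2]
  group

def tau (i j : ℤ) : UGroup := t1 ^ i * t2 ^ j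

theorem tau_mul (i j k l : ℤ) : tau i j * tau k l = tau (i + k) (j + l) := by
  have h : t2 ^ j * t1 ^ k = t1 ^ k * t2 ^ j := ((t_comm.symm.zpow_left j).zpow_right k).eq
  rw [tau, tau, tau, zpow_add, zpow_add,
    show t1 ^ i * t2 ^ j * (t1 ^ k * t2 ^ l) = t1 ^ i * (t2 ^ j * t1 ^ k) * t2 ^ l by
      simp only [mul_assoc], h]
  simp only [mul_assoc]

theorem tau_zero : tau 0 0 = 1 := by simp [tau]

theorem tau_b (i j : ℤ) : tau i j * Ub = Ub * tau j (-i) := by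
  have h1 : Ub⁻¹ * t1 * Ub = t2⁻¹ := by rw [mul_assoc, t1b]; group
  have h2 : Ub⁻¹ * t2 * Ub = t1 := by rw [mul_assoc, t2b]; group
  have h1' : Ub⁻¹ * t1 ^ i * Ub = t2⁻¹ ^ i := by
    rw [← h1]; simpa using (conj_zpow (a := Ub⁻¹) (b := t1) (i := i)).symm
  have h2' : Ub⁻¹ * t2 ^ j * Ub = t1 ^ j := by
    rw [← h2]; simpa using (conj_zpow (a := Ub⁻¹) (b := t2) (i := j)).symm
  have h : t2 ^ (-i) * t1 ^ j = t1 ^ j * t2 ^ (-i) :=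
    ((t_comm.symm.zpow_left (-i)).zpow_right j).eq
  rw [tau, tau, ← h, ← h2', zpow_neg, ← inv_zpow, ← h1']
  group

theorem tau_inv (i j : ℤ) : (tau i j)⁻¹ = tau (-i) (-j) := by
  rw [inv_eq_iff_mul_eq_one, tau_mul]; simp [tau]

def UT : Subgroup UGroup where
  carrier := {g | ∃ i j, g = tau i j}
  one_mem' := ⟨0, 0, tau_zero.symm⟩
  mul_mem' := by
    rintro _ _ ⟨i, j, rfl⟩ ⟨k, l, rfl⟩
    exact ⟨_, _, tau_mul i j k l⟩
  inv_mem' := by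
    rintro _ ⟨i, j, rfl⟩
    exact ⟨_, _, tau_inv i j⟩

theorem tau_mem (i j : ℤ) : tau i j ∈ UT := ⟨i, j, rfl⟩

theorem T_le_P : UT ≤ UP := by
  rintro _ ⟨i, j, rfl⟩
  exact mul_mem (zpow_mem (mul_mem (inv_mem b_mem) c_mem) i)
    (zpow_mem (mul_mem c_mem (inv_mem b_mem)) j)

theorem tau_bk (k : ℕ) : ∀ i j : ℤ, ∃ i' j', tau i j * Ub ^ k = Ub ^ k * tau i' j' := by
  induction k with
  | zero => intro i j; exact ⟨i, j, by simp⟩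
  | succ k ih =>
    intro i j
    obtain ⟨i', j', h⟩ := ih i j
    exact ⟨j', -i', by rw [pow_succ, ← mul_assoc, h, mul_assoc, tau_b, mul_assoc]⟩

theorem P_form' {g : UGroup} (hg : g ∈ UP) : ∃ (k : ℕ) (i j : ℤ), g = Ub ^ k * tau i j := by
  have hb : ∀ y : UGroup, (∃ (k : ℕ) (i j : ℤ), y = Ub ^ k * tau i j) →
      ∃ (k : ℕ) (i j : ℤ), Ub * y = Ub ^ k * tau i j := by
    rintro _ ⟨k, i, j, rfl⟩
    exact ⟨k + 1, i, j, by rw [pow_succ', mul_assoc]⟩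
  have hc : ∀ y : UGroup, (∃ (k : ℕ) (i j : ℤ), y = Ub ^ k * tau i j) →
      ∃ (k : ℕ) (i j : ℤ), Uc * y = Ub ^ k * tau i j := by
    rintro _ ⟨k, i, j, rfl⟩
    obtain ⟨i', j', h⟩ := tau_bk (k + 1) 0 1
    refine ⟨k + 1, i' + i, j' + j, ?_⟩
    rw [← tau_mul, ← mul_assoc (Ub ^ (k + 1)), ← h, pow_succ']
    simp [tau, t2, mul_assoc]
  induction hg using Subgroup.closure_induction_left with
  | one => exact ⟨0, 0, 0, by simp [tau]⟩
  | mul_left x hx y hy ih =>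
    rcases hx with rfl | rfl
    · exact hb _ ih
    · exact hc _ ih
  | inv_mul_cancel x hx y hy ih =>
    rcases hx with rfl | rfl
    · have := hb _ (hb _ (hb _ ih))
      rwa [inv_b, show Ub ^ 3 * y = Ub * (Ub * (Ub * y)) by simp [pow_succ, mul_assoc]]
    · have := hc _ (hc _ (hc _ ih))
      rwa [inv_c, show Uc ^ 3 * y = Uc * (Uc * (Uc * y)) by simp [pow_succ, mul_assoc]]

theorem P_form {g : UGroup} (hg : g ∈ UP) :
    ∃ k : ℕ, k < 4 ∧ ∃ i j : ℤ, g = Ub ^ k * tau i j := by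
  obtain ⟨k, i, j, rfl⟩ := P_form' hg
  exact ⟨k % 4, Nat.mod_lt _ (by norm_num), i, j, by rw [← pow_eq_pow_mod k rel_b4]⟩

theorem phi_t1 (z : ℤ × ℤ) : phi t1 z = z + (0, -1) := by
  ext <;> simp [t1, phi_b, phi_c, pc_apply, pb_inv]
  ring

theorem phi_t2 (z : ℤ × ℤ) : phi t2 z = z + (1, 0) := by
  ext <;> simp [t2, phi_b, phi_c, pc_apply, pb_inv]

theorem perm_zpow (f : Equiv.Perm (ℤ × ℤ)) (v : ℤ × ℤ) (h : ∀ z, f z = z + v) (n : ℤ)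
    (z : ℤ × ℤ) : (f ^ n) z = z + n • v := by
  have hi : ∀ z, f⁻¹ z = z - v := fun z => by
    rw [Equiv.Perm.inv_eq_iff_eq, h, sub_add_cancel]
  induction n using Int.induction_on generalizing z with
  | zero => simp
  | succ n ih => rw [zpow_add_one, Equiv.Perm.mul_apply, h, ih, add_smul, one_smul]; abel
  | pred n ih => rw [zpow_sub_one, Equiv.Perm.mul_apply, hi, ih, sub_smul, one_smul]; abel

theorem phi_tau (i j : ℤ) (z : ℤ × ℤ) : phi (tau i j) z = z + (j, -i) := by
  rw [tau, map_mul, map_zpow, map_zpow, Equiv.Perm.mul_apply, perm_zpow _ _ phi_t2,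
    perm_zpow _ _ phi_t1]
  ext <;> simp

theorem phi_inj {g : UGroup} (hg : g ∈ UP) (h : phi g = 1) : g = 1 := by
  obtain ⟨k, hk, i, j, rfl⟩ := P_form hg
  have h0 := congrArg (fun f : Equiv.Perm (ℤ × ℤ) => f (0, 0)) h
  have h1 := congrArg (fun f : Equiv.Perm (ℤ × ℤ) => f (1, 0)) h
  simp only [map_mul, map_pow, phi_b, Equiv.Perm.mul_apply, phi_tau, Equiv.Perm.one_apply] at h0 h1
  interval_cases k <;> simp [pow_succ, pb_apply] at h0 h1 ⊢
  · obtain ⟨rfl, rfl⟩ := h0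
    exact tau_zero
  all_goals omega

theorem phi_ext {g h : UGroup} (hg : g ∈ UP) (hh : h ∈ UP) (e : phi g = phi h) : g = h := by
  have := phi_inj (mul_mem hg (inv_mem hh)) (by rw [map_mul, e, map_inv, mul_inv_cancel])
  exact mul_inv_eq_one.1 this

/-! ### The elements `x`, `y` -/

theorem word_ext {g h : UGroup} (e0 : rho g 0 = rho h 0) (e : phi g = phi h) : g = h := by
  have h1 : h⁻¹ * g ∈ UP := mem_of_rho (by
    rw [map_mul, map_inv, Equiv.Perm.mul_apply, Equiv.Perm.inv_eq_iff_eq, e0])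
  have h2 := phi_inj h1 (by rw [map_mul, e, map_inv, inv_mul_cancel])
  exact (inv_mul_eq_one.1 h2).symm

theorem phi_x (z : ℤ × ℤ) : phi Ux z = z + (-2, 2) := by
  ext <;> simp [Ux, pow_succ, phi_a, phi_c, pa_apply, pc_inv] <;> ring

theorem phi_y (z : ℤ × ℤ) : phi Uy z = z + (2, 2) := by
  ext <;> simp [Uy, pow_succ, phi_a, phi_c, pa_apply, pc_inv] <;> ring

theorem rho_x (i : Fin 32) : rho Ux i = ta (tc (tc (tc (ta (tc (tc (tc (ta (tc (tc (tc (ta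
    (tc (tc (tc i))))))))))))))) := by
  simp only [Ux, pow_succ, pow_zero, one_mul, map_mul, Equiv.Perm.mul_apply, rho_a, rho_inv_c]

theorem rho_y (i : Fin 32) : rho Uy i = tc (tc (tc (ta (tc (tc (tc (ta (tc (tc (tc (ta (tc (tc
    (tc (ta i))))))))))))))) := by
  simp only [Uy, pow_succ, pow_zero, one_mul, map_mul, Equiv.Perm.mul_apply, rho_a, rho_inv_c]

theorem rho_xy : rho Ux = rho Uy := by
  ext1 i; rw [rho_x, rho_y]; revert i; decide

theorem rho_xx : rho Ux ^ 2 = 1 := by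
  ext1 i
  rw [pow_two, Equiv.Perm.mul_apply, rho_x, rho_x]; revert i; decide

theorem rho_x_ne : rho Ux ≠ 1 := by
  intro h
  have := congrArg (fun f : Equiv.Perm (Fin 32) => f 0) h
  simp only [rho_x] at this
  exact absurd this (by decide)

theorem xy_comm : Commute Ux Uy := by
  apply word_ext
  · simp only [map_mul, rho_xy]
  · ext z <;> simp [phi_x, phi_y] <;> ring

theorem xy_eq : Ux * Uy = t1 ^ (-4 : ℤ) := by
  apply word_ext
  · rw [rho_fix (g := t1 ^ (-4 : ℤ)) (zpow_mem (mul_mem (inv_mem b_mem) c_mem) _), map_mul, ← rho_xy, ← pow_two,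
      rho_xx]; rfl
  · ext z <;> rw [map_zpow, perm_zpow _ _ phi_t1] <;> simp [phi_x, phi_y]; ring

theorem xy'_eq : Ux * Uy⁻¹ = t2 ^ (-4 : ℤ) := by
  apply word_ext
  · rw [rho_fix (g := t2 ^ (-4 : ℤ)) (zpow_mem (mul_mem c_mem (inv_mem b_mem)) _), map_mul, map_inv, ← rho_xy,
      mul_inv_cancel]; rfl
  · have : phi Uy⁻¹ = Equiv.addRight (-2, -2) := by
      rw [map_inv, inv_eq_iff_mul_eq_one]
      ext z <;> simp [phi_y]
    ext z <;> rw [map_zpow, perm_zpow _ _ phi_t2] <;> simp [phi_x, this]; ring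

theorem a_conj_x : Ua * Ux * Ua⁻¹ = Uy := by
  rw [mul_inv_eq_iff_eq_mul]
  apply word_ext
  · simp only [map_mul, Equiv.Perm.mul_apply, rho_a, rho_x, rho_y]; decide
  · ext z <;> simp [phi_x, phi_y, phi_a, pa_apply]; ring

theorem a_conj_y : Ua * Uy * Ua⁻¹ = Ux := by
  simp only [Ux, Uy, pow_succ]; group

theorem b_conj_x : Ub * Ux * Ub⁻¹ = Uy⁻¹ := by
  rw [eq_inv_iff_mul_eq_one, mul_eq_one_comm, ← mul_assoc, mul_inv_eq_one]
  apply word_ext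
  · simp only [map_mul, Equiv.Perm.mul_apply, rho_b, rho_x, rho_y]; decide
  · ext z <;> simp [phi_x, phi_y, phi_b, pb_apply]

theorem b_conj_y : Ub * Uy * Ub⁻¹ = Ux := by
  rw [mul_inv_eq_iff_eq_mul]
  apply word_ext
  · simp only [map_mul, Equiv.Perm.mul_apply, rho_b, rho_x, rho_y]; decide
  · ext z <;> simp [phi_x, phi_y, phi_b, pb_apply]; ring

theorem c_conj_x : Uc * Ux * Uc⁻¹ = Uy⁻¹ := by
  rw [eq_inv_iff_mul_eq_one, mul_eq_one_comm, ← mul_assoc, mul_inv_eq_one]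
  apply word_ext
  · simp only [map_mul, Equiv.Perm.mul_apply, rho_c, rho_x, rho_y]; decide
  · ext z <;> simp [phi_x, phi_y, phi_c, pc_apply]; ring

theorem c_conj_y : Uc * Uy * Uc⁻¹ = Ux := by
  simp only [Ux, Uy, pow_succ]; group

theorem conj_closure {g : UGroup} {S : Set UGroup}
    (h : ∀ s ∈ S, g * s * g⁻¹ ∈ Subgroup.closure S) {n : UGroup} (hn : n ∈ Subgroup.closure S) :
    g * n * g⁻¹ ∈ Subgroup.closure S := by
  have : Subgroup.closure S ≤ (Subgroup.closure S).comap (MulAut.conj g).toMonoidHom := by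
    rw [Subgroup.closure_le]
    intro s hs
    exact h s hs
  exact this hn

theorem normal_one : (UN 1).Normal := by
  have hx : Ux ∈ UN 1 := Subgroup.subset_closure (by simp)
  have hy : Uy ∈ UN 1 := Subgroup.subset_closure (by simp)
  refine ⟨fun n hn g => ?_⟩
  have step : ∀ s : UGroup, s * Ux * s⁻¹ ∈ UN 1 → s * Uy * s⁻¹ ∈ UN 1 →
      ∀ u : UGroup, u * n * u⁻¹ ∈ UN 1 → s * u * n * (s * u)⁻¹ ∈ UN 1 := by
    intro s h1 h2 u hu
    have := conj_closure (g := s) (S := {Ux ^ 1, Uy ^ 1}) (by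
      rintro w (rfl | rfl)
      · rw [pow_one]; exact h1
      · rw [pow_one]; exact h2) hu
    rw [show s * u * n * (s * u)⁻¹ = s * (u * n * u⁻¹) * s⁻¹ by group]
    exact this
  induction g using U_ind with
  | h1 => simpa using hn
  | ha u ih => exact step _ (a_conj_x ▸ hy) (a_conj_y ▸ hx) u ih
  | hb u ih => exact step _ (b_conj_x ▸ inv_mem hy) (b_conj_y ▸ hx) u ih
  | hc u ih => exact step _ (c_conj_x ▸ inv_mem hy) (c_conj_y ▸ hx) u ih

/-! ### Indices -/

theorem lam_tau (i j : ℤ) : lam (tau i j) = 1 := by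
  simp [tau, t1, t2, lam_b, lam_c]

theorem index_T : UT.relIndex UP = 4 := by
  have hk : UT.subgroupOf UP = (lam.comp UP.subtype).ker := by
    ext ⟨g, hg⟩
    rw [Subgroup.mem_subgroupOf, MonoidHom.mem_ker]
    change g ∈ UT ↔ lam g = 1
    constructor
    · rintro ⟨i, j, rfl⟩
      exact lam_tau i j
    · intro h
      obtain ⟨k, hk, i, j, rfl⟩ := P_form hg
      rw [map_mul, lam_tau, map_pow, lam_b, mul_one] at h
      interval_cases k
      · simpa using tau_mem i j
      all_goals exact absurd h (by decide)
  have hr : (lam.comp UP.subtype).range = Subgroup.zpowers (finRotate 4) := by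
    rw [MonoidHom.range_comp, Subgroup.range_subtype, UP, MonoidHom.map_closure,
      Subgroup.zpowers_eq_closure, Set.image_pair, lam_b, lam_c, Set.pair_eq_singleton]
  rw [Subgroup.relIndex, hk, Subgroup.index_ker, hr, Nat.card_zpowers]
  exact orderOf_eq_prime_pow (p := 2) (n := 1) (by decide) (by decide)

/-- The homomorphism `(i, j) ↦ g ^ i * h ^ j` for commuting `g`, `h`. -/
def pairHom {G : Type*} [Group G] (g h : G) (c : Commute g h) : Multiplicative (ℤ × ℤ) →* G where
  toFun p := g ^ p.toAdd.1 * h ^ p.toAdd.2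
  map_one' := by simp
  map_mul' p q := by
    have e : h ^ p.toAdd.2 * g ^ q.toAdd.1 = g ^ q.toAdd.1 * h ^ p.toAdd.2 :=
      ((c.symm.zpow_left _).zpow_right _).eq
    rw [toAdd_mul, Prod.fst_add, Prod.snd_add, zpow_add, zpow_add, mul_assoc, mul_assoc,
      ← mul_assoc (h ^ p.toAdd.2), e, mul_assoc]

theorem pairHom_range {G : Type*} [Group G] (g h : G) (c : Commute g h) :
    (pairHom g h c).range = Subgroup.closure {g, h} := by
  apply le_antisymm
  · rintro _ ⟨p, rfl⟩
    exact mul_mem (zpow_mem (Subgroup.subset_closure (by simp)) _)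
      (zpow_mem (Subgroup.subset_closure (by simp)) _)
  · rw [Subgroup.closure_le]
    rintro w (rfl | rfl)
    · exact ⟨Multiplicative.ofAdd (1, 0), by simp [pairHom]⟩
    · exact ⟨Multiplicative.ofAdd (0, 1), by simp [pairHom]⟩

theorem mem_pair {G : Type*} [Group G] {g h : G} (c : Commute g h) {w : G}
    (hw : w ∈ Subgroup.closure {g, h}) : ∃ i j : ℤ, w = g ^ i * h ^ j := by
  rw [← pairHom_range g h c] at hw
  obtain ⟨p, rfl⟩ := hw
  exact ⟨_, _, rfl⟩

theorem lattice_index {G : Type*} [Group G] (g h : G) (c : Commute g h)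
    (inj : ∀ i j : ℤ, g ^ i * h ^ j = 1 → i = 0 ∧ j = 0) (n : ℕ) :
    (Subgroup.closure {g ^ n, h ^ n}).relIndex (Subgroup.closure {g, h}) = n ^ 2 := by
  let q : Multiplicative (ℤ × ℤ) →* Multiplicative (ZMod n × ZMod n) :=
    AddMonoidHom.toMultiplicative
      ((Int.castAddHom (ZMod n)).prodMap (Int.castAddHom (ZMod n)))
  have hq : ∀ i j : ℤ, Multiplicative.ofAdd (i, j) ∈ q.ker ↔ (n : ℤ) ∣ i ∧ (n : ℤ) ∣ j := by
    intro i j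
    rw [← ZMod.intCast_zmod_eq_zero_iff_dvd, ← ZMod.intCast_zmod_eq_zero_iff_dvd,
      ← Prod.mk_eq_zero]
    rfl
  have hs : Function.Surjective q := by
    intro z
    obtain ⟨i, hi⟩ := ZMod.intCast_surjective z.toAdd.1
    obtain ⟨j, hj⟩ := ZMod.intCast_surjective z.toAdd.2
    exact ⟨Multiplicative.ofAdd (i, j), Prod.ext hi hj⟩
  have hk : (Subgroup.closure {g ^ n, h ^ n}).comap (pairHom g h c) = q.ker := by
    ext p
    obtain ⟨⟨i, j⟩, rfl⟩ := Multiplicative.ofAdd.surjective p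
    rw [hq, Subgroup.mem_comap]
    change g ^ i * h ^ j ∈ _ ↔ _
    constructor
    · intro hm
      obtain ⟨k, l, e⟩ := mem_pair (c.pow_pow n n) hm
      have e2 : g ^ (i - n * k) * h ^ (j - n * l) = 1 := by
        have e3 : h ^ j * (h ^ (n * l : ℤ))⁻¹ = (g ^ i)⁻¹ * g ^ (n * k : ℤ) := by
          rw [mul_inv_eq_iff_eq_mul, mul_assoc, eq_inv_mul_iff_mul_eq, e, zpow_mul, zpow_mul,
            zpow_natCast, zpow_natCast]
        rw [zpow_sub, zpow_sub, e3]
        group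
      obtain ⟨h1, h2⟩ := inj _ _ e2
      exact ⟨⟨k, by linarith⟩, ⟨l, by linarith⟩⟩
    · rintro ⟨⟨k, rfl⟩, ⟨l, rfl⟩⟩
      rw [zpow_mul, zpow_mul, zpow_natCast, zpow_natCast]
      exact mul_mem (zpow_mem (Subgroup.subset_closure (by simp)) _)
        (zpow_mem (Subgroup.subset_closure (by simp)) _)
  rw [← pairHom_range g h c, ← Subgroup.index_comap, hk, Subgroup.index_ker,
    MonoidHom.range_eq_top.2 hs, Nat.card_congr (Subgroup.topEquiv.toEquiv),
    Nat.card_congr Multiplicative.toAdd, Nat.card_prod, Nat.card_zmod, pow_two]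

theorem T_eq : UT = Subgroup.closure {t1, t2} := by
  rw [← pairHom_range _ _ t_comm]
  ext g
  constructor
  · rintro ⟨i, j, rfl⟩; exact ⟨Multiplicative.ofAdd (i, j), rfl⟩
  · rintro ⟨p, rfl⟩; exact ⟨p.toAdd.1, p.toAdd.2, rfl⟩

/-- The intersection of `N_1` with the translations in `P`. -/
def UM : Subgroup UGroup := Subgroup.closure {t1 ^ 4, t2 ^ 4}

theorem index_M_T : UM.relIndex UT = 4 ^ 2 := by
  rw [T_eq]
  refine lattice_index t1 t2 t_comm (fun i j h => ?_) 4
  have h0 := congrArg (fun u => phi u 0) h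
  simp only [map_one, Equiv.Perm.one_apply] at h0
  rw [← tau, phi_tau] at h0
  simp at h0
  exact ⟨h0.2, h0.1⟩

theorem index_N_N (m : ℕ) : (UN m).relIndex (UN 1) = m ^ 2 := by
  have e : UN 1 = Subgroup.closure {Ux, Uy} := by simp [UN]
  rw [e]
  refine lattice_index Ux Uy xy_comm (fun i j h => ?_) m
  have h0 := congrArg (fun u => phi u 0) h
  simp only [map_mul, map_zpow, map_one, Equiv.Perm.one_apply, Equiv.Perm.mul_apply,
    perm_zpow _ _ phi_x, perm_zpow _ _ phi_y] at h0
  simp at h0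
  omega

theorem mem_N1 {g : UGroup} (hg : g ∈ UN 1) : ∃ i j : ℤ, g = Ux ^ i * Uy ^ j :=
  mem_pair xy_comm (by simpa [UN] using hg)

theorem x_mem : Ux ∈ UN 1 := Subgroup.subset_closure (by simp)
theorem y_mem : Uy ∈ UN 1 := Subgroup.subset_closure (by simp)

theorem t1_4 : t1 ^ 4 = (Ux * Uy)⁻¹ := by
  rw [xy_eq, zpow_neg, inv_inv]; norm_cast

theorem t2_4 : t2 ^ 4 = (Ux * Uy⁻¹)⁻¹ := by
  rw [xy'_eq, zpow_neg, inv_inv]; norm_cast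

theorem M_le_N : UM ≤ UN 1 := by
  rw [UM, Subgroup.closure_le]
  rintro w (rfl | rfl)
  · rw [t1_4]; exact inv_mem (mul_mem x_mem y_mem)
  · rw [t2_4]; exact inv_mem (mul_mem x_mem (inv_mem y_mem))

theorem M_le_T : UM ≤ UT := by
  rw [UM, T_eq, Subgroup.closure_le]
  rintro w (rfl | rfl)
  · exact pow_mem (Subgroup.subset_closure (by simp)) _
  · exact pow_mem (Subgroup.subset_closure (by simp)) _

theorem orderOf_rho_x : orderOf (rho Ux) = 2 := orderOf_eq_prime rho_xx rho_x_ne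

theorem index_M_N : UM.relIndex (UN 1) = 2 := by
  have hM : UM ≤ rho.ker := by
    rw [UM, Subgroup.closure_le]
    rintro w (rfl | rfl)
    · change rho (t1 ^ 4) = 1
      rw [t1_4, map_inv, map_mul, ← rho_xy, ← pow_two, rho_xx, inv_one]
    · change rho (t2 ^ 4) = 1
      rw [t2_4, map_inv, map_mul, map_inv, ← rho_xy, mul_inv_cancel, inv_one]
  have hk : UM.subgroupOf (UN 1) = (rho.comp (UN 1).subtype).ker := by
    ext ⟨g, hg⟩
    rw [Subgroup.mem_subgroupOf, MonoidHom.mem_ker]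
    change g ∈ UM ↔ rho g = 1
    refine ⟨fun h => hM h, fun h => ?_⟩
    obtain ⟨i, j, rfl⟩ := mem_N1 hg
    rw [map_mul, map_zpow, map_zpow, ← rho_xy, ← zpow_add, ← orderOf_dvd_iff_zpow_eq_one,
      orderOf_rho_x] at h
    obtain ⟨s, hs⟩ := h
    push_cast at hs
    have c' : Commute Ux Uy⁻¹ := xy_comm.inv_right
    have e : Ux ^ i * Uy ^ j = (Ux * Uy) ^ s * (Ux * Uy⁻¹) ^ (i - s) := by
      rw [xy_comm.mul_zpow, c'.mul_zpow, mul_assoc, ← mul_assoc (Uy ^ s),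
        ((xy_comm.symm.zpow_left s).zpow_right (i - s)).eq, inv_zpow', mul_assoc, ← zpow_add,
        ← mul_assoc, ← zpow_add]
      congr 2 <;> linarith
    have m1 : Ux * Uy ∈ UM := by
      rw [← inv_mem_iff, ← t1_4]; exact Subgroup.subset_closure (by simp)
    have m2 : Ux * Uy⁻¹ ∈ UM := by
      rw [← inv_mem_iff, ← t2_4]; exact Subgroup.subset_closure (by simp)
    rw [e]
    exact mul_mem (zpow_mem m1 _) (zpow_mem m2 _)
  have hr : (rho.comp (UN 1).subtype).range = Subgroup.zpowers (rho Ux) := by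
    rw [MonoidHom.range_comp, Subgroup.range_subtype, UN, MonoidHom.map_closure,
      Subgroup.zpowers_eq_closure, Set.image_pair, pow_one, pow_one, ← rho_xy,
      Set.pair_eq_singleton]
  rw [Subgroup.relIndex, hk, Subgroup.index_ker, hr, Nat.card_zpowers, orderOf_rho_x]

theorem index_one : (UN 1).index = 1024 := by
  have h1 := Subgroup.relIndex_mul_index M_le_N
  have h2 := Subgroup.relIndex_mul_index M_le_T
  have h3 := Subgroup.relIndex_mul_index T_le_P
  rw [index_M_N] at h1
  rw [index_M_T] at h2
  rw [index_T, index_P] at h3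
  omega

theorem N_le_N (m : ℕ) : UN m ≤ UN 1 := by
  rw [UN, Subgroup.closure_le]
  rintro w (rfl | rfl)
  · exact pow_mem x_mem _
  · exact pow_mem y_mem _

theorem index_UN (m : ℕ) : (UN m).index = 1024 * m ^ 2 := by
  rw [← Subgroup.relIndex_mul_index (N_le_N m), index_N_N, index_one, mul_comm]

theorem U_solvable : Group.IsSolvable UGroup := by
  haveI := normal_one
  have hc : Nat.card (UGroup ⧸ UN 1) = 2 ^ 10 := by
    have := index_UN 1
    rw [Subgroup.index] at this
    rw [this]; norm_num
  haveI : Finite (UGroup ⧸ UN 1) := Nat.finite_of_card_ne_zero (by rw [hc]; norm_num)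
  haveI : Fact (Nat.Prime 2) := ⟨Nat.prime_two⟩
  haveI := (IsPGroup.of_card hc).isNilpotent
  haveI : Group.IsSolvable (UN 1) := Group.isSolvable_of_comm (by
    rintro ⟨g, hg⟩ ⟨h, hh⟩
    obtain ⟨p, rfl⟩ : g ∈ (pairHom Ux Uy xy_comm).range := by
      rw [pairHom_range]; simpa [UN] using hg
    obtain ⟨q, rfl⟩ : h ∈ (pairHom Ux Uy xy_comm).range := by
      rw [pairHom_range]; simpa [UN] using hh
    apply Subtype.ext
    change pairHom Ux Uy xy_comm p * pairHom Ux Uy xy_comm q =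
      pairHom Ux Uy xy_comm q * pairHom Ux Uy xy_comm p
    rw [← map_mul, ← map_mul, mul_comm])
  exact Group.isSolvable_of_ker_le_range (UN 1).subtype (QuotientGroup.mk' (UN 1)) (by simp)

/-- For every positive integer `m`, the quotient `G_m = U / N_m` is a solvable group
of order `1024 m^2`. -/
theorem Gm_solvable (m : ℕ) (hm : 0 < m) (hnorm : (UN m).Normal) :
    haveI := hnorm
    IsSolvable (UGroup ⧸ UN m) ∧ Nat.card (UGroup ⧸ UN m) = 1024 * m ^ 2 := by
  haveI := hnorm
  haveI := U_solvable
  exact ⟨Group.isSolvable_of_surjective (QuotientGroup.mk'_surjective (UN m)), index_UN m⟩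
end

section
/- The finitely presented group on generators u, v with defining relations u^4 = v^4 = (uv)^2 = (u^2 v^2)^4 = 1 has order 2^7 = 128. -/
/-- The relators `u^4, v^4, (uv)^2, (u^2v^2)^4` on two generators `u, v`
(indexed `0, 1`). -/
def Vrels : Set (FreeGroup (Fin 2)) :=
  {(FreeGroup.of 0) ^ 4, (FreeGroup.of 1) ^ 4,
   (FreeGroup.of 0 * FreeGroup.of 1) ^ 2,
   ((FreeGroup.of 0) ^ 2 * (FreeGroup.of 1) ^ 2) ^ 4}

namespace V128

abbrev Om := ZMod 8 × ZMod 4 × ZMod 4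

def c84 (a : ZMod 8) : ZMod 4 := (a.val : ZMod 4)
def c48 (a : ZMod 4) : ZMod 8 := (a.val : ZMod 8)

def su (p : Om) : Om := (-p.1 - 2 * c48 p.2.1, c84 p.1 + p.2.1, p.2.2 + 1)
def sv (p : Om) : Om := (1 - p.1 - 2 * c48 p.2.1, c84 p.1 + p.2.1, p.2.2 + 1)

set_option maxRecDepth 100000 in
lemma su4 : ∀ p, su (su (su (su p))) = p := by decide +kernel
set_option maxRecDepth 100000 in
lemma sv4 : ∀ p, sv (sv (sv (sv p))) = p := by decide +kernel
set_option maxRecDepth 100000 in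
lemma suv : ∀ p, su (sv (su (sv p))) = p := by decide +kernel
def suuvv (p : Om) : Om := su (su (sv (sv p)))
set_option maxRecDepth 100000 in
lemma suuvv4 : ∀ p, suuvv (suuvv (suuvv (suuvv p))) = p := by decide +kernel

def pu : Equiv.Perm Om := ⟨su, fun p => su (su (su p)), su4, su4⟩
def pv : Equiv.Perm Om := ⟨sv, fun p => sv (sv (sv p)), sv4, sv4⟩

lemma pu_apply (p : Om) : pu p = su p := rfl
lemma pv_apply (p : Om) : pv p = sv p := rfl

def gens : Fin 2 → Equiv.Perm Om := ![pu, pv]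

lemma gens_rel : ∀ r ∈ Vrels, FreeGroup.lift gens r = 1 := by
  intro r hr
  rcases hr with rfl | rfl | rfl | rfl
  · ext1 p
    simpa [gens, pow_succ, pu_apply, pv_apply] using su4 p
  · ext1 p
    simpa [gens, pow_succ, pu_apply, pv_apply] using sv4 p
  · ext1 p
    simpa [gens, pow_succ, pu_apply, pv_apply] using suv p
  · ext1 p
    simpa [gens, pow_succ, pu_apply, pv_apply, suuvv] using suuvv4 p

abbrev G := PresentedGroup Vrels

def phi : G →* Equiv.Perm Om := PresentedGroup.toGroup gens_rel

def u : G := PresentedGroup.of 0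
def v : G := PresentedGroup.of 1

lemma phi_u : phi u = pu := PresentedGroup.toGroup.of gens_rel
lemma phi_v : phi v = pv := PresentedGroup.toGroup.of gens_rel

lemma rel_one {r : FreeGroup (Fin 2)} (h : r ∈ Vrels) : PresentedGroup.mk Vrels r = 1 :=
  PresentedGroup.one_of_mem h

lemma u4 : u ^ 4 = 1 := by
  have := rel_one (r := (FreeGroup.of 0) ^ 4) (by simp [Vrels])
  simp only [map_pow, map_mul] at this
  exact this
lemma v4 : v ^ 4 = 1 := by
  have := rel_one (r := (FreeGroup.of 1) ^ 4) (by simp [Vrels])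
  simp only [map_pow, map_mul] at this
  exact this
lemma uv2 : (u * v) ^ 2 = 1 := by
  have := rel_one (r := (FreeGroup.of 0 * FreeGroup.of 1) ^ 2) (by simp [Vrels])
  simp only [map_pow, map_mul] at this
  exact this
lemma uuvv4 : (u ^ 2 * v ^ 2) ^ 4 = 1 := by
  have := rel_one (r := ((FreeGroup.of 0) ^ 2 * (FreeGroup.of 1) ^ 2) ^ 4) (by simp [Vrels])
  simp only [map_pow, map_mul] at this
  exact this

def x : G := v * u⁻¹
def w : G := v ^ 2 * u ^ 2

lemma uu : u ^ 2 = u⁻¹ * u⁻¹ := by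
  have := u4
  rw [← mul_inv_rev, ← pow_two, eq_inv_iff_mul_eq_one, ← pow_add]; exact this
lemma vv : v ^ 2 = v⁻¹ * v⁻¹ := by
  have := v4
  rw [← mul_inv_rev, ← pow_two, eq_inv_iff_mul_eq_one, ← pow_add]; exact this
lemma uv_eq : u * v = v⁻¹ * u⁻¹ := by
  rw [← mul_inv_rev, eq_inv_iff_mul_eq_one, ← pow_two]; exact uv2
lemma vu_eq : v * u = u⁻¹ * v⁻¹ := by
  have h := uv2
  rw [pow_two] at h
  have : v * u = u⁻¹ * (u * v * (u * v)) * v⁻¹ := by group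
  rw [this, h]; group

lemma w4 : w ^ 4 = 1 := by
  have : w ^ 4 = u ^ (-2 : ℤ) * (u ^ 2 * v ^ 2) ^ 4 * u ^ (2 : ℤ) := by
    have h : w = u ^ (-2 : ℤ) * (u ^ 2 * v ^ 2) * (u ^ (-2 : ℤ))⁻¹ := by unfold w; group
    rw [h, conj_pow]; group
  rw [this, uuvv4]; group

lemma w_eq : w = v ^ 2 * (u⁻¹ * u⁻¹) := by rw [w, uu]

lemma ux : u * x * u⁻¹ = x⁻¹ * w := by
  rw [w_eq, x]; group

lemma uw : u * w * u⁻¹ = x⁻¹ * x⁻¹ * w := by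
  have h1 : x⁻¹ * x⁻¹ * w = u * v⁻¹ * (u * v) * u⁻¹ * u⁻¹ := by
    rw [w_eq, x]; group
  have h2 : u * v⁻¹ * (v⁻¹ * u⁻¹) * u⁻¹ * u⁻¹ = u * (v⁻¹ * v⁻¹) * (u⁻¹ * u⁻¹) * u⁻¹ := by group
  rw [h1, uv_eq, h2, ← vv, w_eq]; group

lemma xw : Commute x w := by
  have h1 : x * w = v * (u⁻¹ * v ^ 2 * u⁻¹) * u⁻¹ := by rw [w_eq, x]; group
  have h2 : w * x = v * (v * u * (u * v)) * u⁻¹ := by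
    rw [w, x, pow_two, pow_two]; group
  show x * w = w * x
  rw [h1, h2, vu_eq, uv_eq, vv]; group

lemma x8 : x ^ 8 = 1 := by
  have h : (u * w * u⁻¹) ^ 4 = 1 := by rw [conj_pow, w4]; simp
  rw [uw] at h
  have c : Commute (x⁻¹ * x⁻¹) w := (xw.inv_left).mul_left xw.inv_left
  rw [c.mul_pow, w4, mul_one] at h
  have : x ^ 8 = ((x⁻¹ * x⁻¹) ^ 4)⁻¹ := by group
  rw [this, h, inv_one]

lemma zcongr {g : G} {n : ℕ} (h : g ^ n = 1) {a b : ℤ} (hab : (n : ℤ) ∣ a - b) :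
    g ^ a = g ^ b := by
  obtain ⟨k, hk⟩ := hab
  have : a = b + n * k := by omega
  rw [this, zpow_add, zpow_mul, zpow_natCast, h]; simp

def f (p : Om) : G := x ^ (p.1.val : ℤ) * w ^ (p.2.1.val : ℤ) * u ^ (p.2.2.val : ℤ)

lemma d1 : ∀ (i : ZMod 8) (j : ZMod 4),
    ((8 : ℕ) : ℤ) ∣ (-(i.val : ℤ) - 2 * j.val) - ((-i - 2 * c48 j).val : ℤ) := by decide +kernel
lemma d1' : ∀ (i : ZMod 8) (j : ZMod 4),
    ((8 : ℕ) : ℤ) ∣ (1 + (-(i.val : ℤ) - 2 * j.val)) - ((1 - i - 2 * c48 j).val : ℤ) := by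
  decide +kernel
lemma d2 : ∀ (i : ZMod 8) (j : ZMod 4),
    ((4 : ℕ) : ℤ) ∣ ((i.val : ℤ) + j.val) - ((c84 i + j).val : ℤ) := by decide +kernel
lemma d3 : ∀ (k : ZMod 4),
    ((4 : ℕ) : ℤ) ∣ (1 + (k.val : ℤ)) - ((k + 1).val : ℤ) := by decide +kernel

lemma u_word (a b c : ℤ) :
    u * (x ^ a * w ^ b * u ^ c) = x ^ (-a - 2 * b) * w ^ (a + b) * u ^ (1 + c) := by
  have h1 : u * (x ^ a * w ^ b * u ^ c)
      = (u * x * u⁻¹) ^ a * (u * w * u⁻¹) ^ b * u ^ (1 + c) := by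
    rw [conj_zpow, conj_zpow, zpow_add]; group
  have c2 : Commute (x⁻¹ * x⁻¹) w := (xw.inv_left).mul_left xw.inv_left
  have c3 : x⁻¹ * x⁻¹ = x ^ (-2 : ℤ) := by group
  rw [h1, ux, uw, xw.inv_left.mul_zpow, c2.mul_zpow, c3, ← zpow_mul, inv_zpow', sub_eq_add_neg,
    zpow_add x, zpow_add w, ← neg_mul]
  have c4 : Commute (w ^ a) (x ^ (-2 * b)) := (xw.symm.zpow_zpow a _)
  congr 1
  rw [mul_assoc, ← mul_assoc (w ^ a), c4.eq]
  simp only [mul_assoc]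

lemma f_su (p : Om) : f (su p) = u * f p := by
  obtain ⟨i, j, k⟩ := p
  unfold f
  rw [u_word, zcongr x8 (d1 i j), zcongr w4 (d2 i j), zcongr u4 (d3 k)]
  rfl

lemma f_sv (p : Om) : f (sv p) = v * f p := by
  have hv : v = x * u := by unfold x; group
  obtain ⟨i, j, k⟩ := p
  unfold f
  rw [hv, mul_assoc x u, u_word, ← mul_assoc, ← mul_assoc, ← zpow_one_add,
    zcongr x8 (d1' i j), zcongr w4 (d2 i j), zcongr u4 (d3 k)]
  rfl

lemma f_phi (g : G) : ∀ p, f (phi g p) = g * f p := by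
  have hinv : ∀ g : G, (∀ p, f (phi g p) = g * f p) → ∀ p, f (phi g⁻¹ p) = g⁻¹ * f p := by
    intro g h p
    have := h (phi g⁻¹ p)
    rw [eq_inv_mul_iff_mul_eq, ← this, ← Equiv.Perm.mul_apply, ← map_mul, mul_inv_cancel, map_one,
      Equiv.Perm.one_apply]
  have hg : g ∈ Subgroup.closure (Set.range (PresentedGroup.of (rels := Vrels))) := by
    rw [PresentedGroup.closure_range_of]; trivial
  induction hg using Subgroup.closure_induction with
  | mem y hy =>
    obtain ⟨i, rfl⟩ := hy
    intro p
    fin_cases i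
    · show f (phi u p) = u * f p
      rw [phi_u]; exact f_su p
    · show f (phi v p) = v * f p
      rw [phi_v]; exact f_sv p
  | one => intro p; simp
  | mul a b _ _ ha hb => intro p; rw [map_mul, Equiv.Perm.mul_apply, ha, hb, mul_assoc]
  | inv a _ ha => exact hinv a ha

def o : Om := (0, 0, 0)

def tx (p : Om) : Om := sv (su (su (su p)))
def tw (p : Om) : Om := sv (sv (su (su p)))

lemma phi_x (p : Om) : phi x p = tx p := by
  rw [x, map_mul, map_inv, phi_u, phi_v]; rfl
lemma phi_w (p : Om) : phi w p = tw p := by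
  rw [w, map_mul, map_pow, map_pow, phi_u, phi_v]; rfl

lemma iter_eq : ∀ p : Om,
    tx^[p.1.val] (tw^[p.2.1.val] (su^[p.2.2.val] o)) = p := by decide +kernel

lemma phi_f (p : Om) : phi (f p) o = p := by
  have hx : (phi x : Om → Om) = tx := funext phi_x
  have hw : (phi w : Om → Om) = tw := funext phi_w
  have hu : (phi u : Om → Om) = su := by rw [phi_u]; rfl
  conv_rhs => rw [← iter_eq p]
  simp only [f, zpow_natCast, map_mul, map_pow, Equiv.Perm.mul_apply, ← hx, ← hw, ← hu,
    Equiv.Perm.iterate_eq_pow]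

def e : G ≃ Om where
  toFun g := phi g o
  invFun := f
  left_inv g := by
    show f (phi g o) = g
    rw [f_phi]; simp [f, o]
  right_inv := phi_f

end V128

/-- The finitely presented group `⟨u, v | u^4 = v^4 = (uv)^2 = (u^2v^2)^4 = 1⟩`
has order `2^7 = 128`. -/
theorem presented_group_order_128 : Nat.card (PresentedGroup Vrels) = 128 := by
  rw [Nat.card_congr V128.e]
  simp [V128.Om]
end

section
/- In the group U, with z = (bc^{-1})^4 and w = (c^{-1}b)^4, the following conjugation relations hold: a^{-1}za = z^{-1}, b^{-1}zb = w, c^{-1}zc = w, a^{-1}wa = w, b^{-1}wb = z^{-1}, and c^{-1}wc = z^{-1}. -/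
/-- The element `z = (bc⁻¹)^4` of `U`. -/
def Uz : UGroup := (Ub * Uc⁻¹) ^ 4

/-- The element `w = (c⁻¹b)^4` of `U`. -/
def Uw : UGroup := (Uc⁻¹ * Ub) ^ 4

set_option linter.all false
set_option linter.unusedSimpArgs false

theorem zw_words {G : Type} [Group G] (a A b B c C : G)
    (a1 : ∀ t : G, a * (A * t) = t)
    (a2 : ∀ t : G, A * (a * t) = t)
    (b1 : ∀ t : G, b * (B * t) = t)
    (b2 : ∀ t : G, B * (b * t) = t)
    (c1 : ∀ t : G, c * (C * t) = t)
    (c2 : ∀ t : G, C * (c * t) = t)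
    (r1 : ∀ t : G, a * (a * (a * (a * t))) = t)
    (r2 : ∀ t : G, b * (b * (b * (b * t))) = t)
    (r3 : ∀ t : G, c * (c * (c * (c * t))) = t)
    (r4 : ∀ t : G, a * (b * (a * (b * t))) = t)
    (r5 : ∀ t : G, b * (c * (b * (c * t))) = t)
    (r6 : ∀ t : G, a * (b * (c * (a * (b * (c * t))))) = t)
    (r8 : ∀ t : G, a * (a * (c * (c * (b * (b * (a * (c * (a * (c * t))))))))) = t)
    (r9 : ∀ t : G, A * (c * (a * (C * (b * (b * t))))) = t)
    :
    (∀ t : G, A * (b * (C * (b * (C * (b * (C * (b * (C * (a * t))))))))) = c * (B * (c * (B * (c * (B * (c * (B * t)))))))) ∧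
    (∀ t : G, B * (C * (b * (C * (b * (C * (b * (C * (b * (b * t))))))))) = c * (B * (c * (B * (c * (B * (c * (B * t)))))))) ∧
    (∀ t : G, C * (C * (b * (C * (b * (C * (b * (C * (b * (c * t))))))))) = c * (B * (c * (B * (c * (B * (c * (B * t)))))))) := by
  have h1 (t : G) : c * (c * (c * t)) = C * t :=
    (congrArg (fun x => c * (c * (c * x))) (c1 t)).symm.trans (r3 (C * t))
  have h2 (t : G) : C * (C * t) = c * (c * t) :=
    (h1 (C * t)).symm.trans (congrArg (fun x => c * (c * x)) (c1 t))
  have h3 (t : G) : c * (b * (c * t)) = B * t :=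
    (b2 (c * (b * (c * t)))).symm.trans (congrArg (fun x => B * x) (r5 t))
  have h4 (t : G) : C * (B * t) = b * (c * t) :=
    (congrArg (fun x => C * x) (h3 t)).symm.trans (c2 (b * (c * t)))
  have h5 (t : G) : c * (b * t) = B * (C * t) :=
    (congrArg (fun x => c * (b * x)) (c1 t)).symm.trans (h3 (C * t))
  have h6 (t : G) : C * (b * (c * t)) = c * (c * (B * t)) :=
    (congrArg (fun x => C * x) (h4 t)).symm.trans (h2 (B * t))
  have h7 (t : G) : b * (a * (b * t)) = A * t :=
    (a2 (b * (a * (b * t)))).symm.trans (congrArg (fun x => A * x) (r4 t))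
  have h8 (t : G) : A * (B * t) = b * (a * t) :=
    (h7 (B * t)).symm.trans (congrArg (fun x => b * (a * x)) (b1 t))
  have h9 (t : G) : B * (A * t) = a * (b * t) :=
    (congrArg (fun x => B * x) (h7 t)).symm.trans (b2 (a * (b * t)))
  have h10 (t : G) : a * (b * (a * t)) = B * t :=
    (congrArg (fun x => a * x) (h8 t)).symm.trans (a1 (B * t))
  have h11 (t : G) : C * (a * (b * t)) = b * (c * (A * t)) :=
    (congrArg (fun x => C * x) (h9 t)).symm.trans (h4 (A * t))
  have h12 (t : G) : a * (a * (a * t)) = A * t :=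
    (a2 (a * (a * (a * t)))).symm.trans (congrArg (fun x => A * x) (r1 t))
  have h13 (t : G) : A * (A * t) = a * (a * t) :=
    (h12 (A * t)).symm.trans (congrArg (fun x => a * (a * x)) (a1 t))
  have h14 (t : G) : B * (a * (a * t)) = a * (b * (A * t)) :=
    (h10 (a * (a * t))).symm.trans (congrArg (fun x => a * (b * x)) (h12 t))
  have h15 (t : G) : b * (b * (b * t)) = B * t :=
    (b2 (b * (b * (b * t)))).symm.trans (congrArg (fun x => B * x) (r2 t))
  have h16 (t : G) : B * (B * t) = b * (b * t) :=
    (congrArg (fun x => B * x) (h15 t)).symm.trans (b2 (b * (b * t)))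
  have h17 (t : G) : A * (b * (b * t)) = b * (a * (B * t)) :=
    (h7 (b * (b * t))).symm.trans (congrArg (fun x => b * (a * x)) (h15 t))
  have h18 (t : G) : B * (a * (b * t)) = b * (b * (A * t)) :=
    (h15 (a * (b * t))).symm.trans (congrArg (fun x => b * (b * x)) (h7 t))
  have h19 (t : G) : C * (b * (b * t)) = b * (c * (B * t)) :=
    (congrArg (fun x => C * x) (h16 t)).symm.trans (h4 (B * t))
  have h20 (t : G) : A * (c * (a * (b * (c * (B * t))))) = t := by
    simpa only [h19] using r9 t
  have h21 (t : G) : A * (c * (a * (b * (c * t)))) = b * t :=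
    (congrArg (fun x => A * (c * (a * (b * (c * x))))) (b2 t)).symm.trans (h20 (b * t))
  have h22 (t : G) : A * (c * (a * (b * t))) = b * (C * t) :=
    (congrArg (fun x => A * (c * (a * (b * x)))) (c1 t)).symm.trans (h21 (C * t))
  have h23 (t : G) : c * (a * (b * t)) = a * (b * (C * t)) :=
    (a1 (c * (a * (b * t)))).symm.trans (congrArg (fun x => a * x) (h22 t))
  have h24 (t : G) : A * (c * (a * t)) = b * (b * (c * t)) := by
    simpa only [h4] using (congrArg (fun x => A * (c * (a * x))) (b1 t)).symm.trans (h22 (B * t))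
  have h25 (t : G) : A * (c * (B * t)) = b * (C * (a * t)) :=
    (congrArg (fun x => A * (c * x)) (h10 t)).symm.trans (h22 (a * t))
  have h26 (t : G) : b * (c * (A * (C * t))) = a * (b * t) := by
    simpa only [h11] using (congrArg (fun x => C * x) (h23 t)).symm.trans (c2 (a * (b * t)))
  have h27 (t : G) : c * (A * (C * t)) = b * (b * (A * t)) := by
    simpa only [h18] using (b2 (c * (A * (C * t)))).symm.trans (congrArg (fun x => B * x) (h26 t))
  have h28 (t : G) : a * (b * (b * (c * t))) = c * (a * t) :=
    (congrArg (fun x => a * x) (h24 t)).symm.trans (a1 (c * (a * t)))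
  have h29 (t : G) : A * (b * (c * t)) = b * (c * (a * t)) :=
    (h7 (b * (c * t))).symm.trans (congrArg (fun x => b * x) (h28 t))
  have h30 (t : G) : c * (a * (C * t)) = a * (b * (b * t)) :=
    (h28 (C * t)).symm.trans (congrArg (fun x => a * (b * (b * x))) (c1 t))
  have h31 (t : G) : b * (c * (A * (b * t))) = a * (C * t) := by
    simpa only [h11] using (congrArg (fun x => C * x) (h30 t)).symm.trans (c2 (a * (C * t)))
  have h32 (t : G) : c * (A * (b * t)) = B * (a * (C * t)) :=
    (b2 (c * (A * (b * t)))).symm.trans (congrArg (fun x => B * x) (h31 t))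
  have h33 (t : G) : a * (b * (C * (a * t))) = c * (B * t) :=
    (h23 (a * t)).symm.trans (congrArg (fun x => c * x) (h10 t))
  have h34 (t : G) : A * (C * (a * t)) = b * (c * (B * t)) :=
    (h7 (C * (a * t))).symm.trans (congrArg (fun x => b * x) (h33 t))
  have h35 (t : G) : a * (a * (C * (a * t))) = b * (c * (a * (B * t))) := by
    simpa only [h29] using (h13 (C * (a * t))).symm.trans (congrArg (fun x => A * x) (h34 t))
  have h36 (t : G) : B * (C * (a * (B * t))) = B * (a * (C * (b * t))) := by
    simpa only [h5] using (congrArg (fun x => c * x) (h17 t)).symm.trans (h32 (b * t))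
  have h37 (t : G) : b * (c * (a * (a * (b * t)))) = a * (a * (C * t)) := by
    simpa only [h9] using (h35 (A * t)).symm.trans (congrArg (fun x => a * (a * (C * x))) (a1 t))
  have h38 (t : G) : C * (a * (B * t)) = a * (C * (b * t)) := by
    simpa only [b1] using (b1 (C * (a * (B * t)))).symm.trans (congrArg (fun x => b * x) (h36 t))
  have h39 (t : G) : a * (a * (c * (c * (B * t)))) = b * (c * (a * (c * (a * t)))) := by
    simpa only [h6] using (h37 (b * (c * t))).symm.trans (congrArg (fun x => b * (c * (a * x))) (h28 t))
  have h40 (t : G) : a * (a * (c * (c * (a * t)))) = b * (c * (a * (c * (B * t)))) := by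
    simpa only [h2] using (h37 (C * (a * t))).symm.trans (congrArg (fun x => b * (c * (a * x))) (h33 t))
  have h41 (t : G) : a * (a * (c * (B * (C * (b * t))))) = b * (c * (a * (c * (a * (B * t))))) := by
    simpa only [h5] using (congrArg (fun x => a * (a * (c * (c * x)))) (h16 t)).symm.trans (h39 (B * t))
  have h42 (t : G) : b * (c * (a * (c * (a * (B * (a * (c * (a * (c * t))))))))) = t := by
    simpa only [h5, h41] using r8 t
  have h43 (t : G) : c * (a * (c * (a * (B * (a * (c * (a * (c * t)))))))) = B * t :=
    (b2 (c * (a * (c * (a * (B * (a * (c * (a * (c * t)))))))))).symm.trans (congrArg (fun x => B * x) (h42 t))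
  have h44 (t : G) : a * (c * (a * (B * (a * (c * (a * (c * t))))))) = b * (c * t) := by
    simpa only [h4] using (c2 (a * (c * (a * (B * (a * (c * (a * (c * t))))))))).symm.trans (congrArg (fun x => C * x) (h43 t))
  have h45 (t : G) : a * (c * (a * (B * (a * (c * (a * t)))))) = b * t := by
    simpa only [c1] using (congrArg (fun x => a * (c * (a * (B * (a * (c * (a * x))))))) (c1 t)).symm.trans (h44 (C * t))
  have h46 (t : G) : a * (c * (a * (B * (a * (c * t))))) = b * (A * t) :=
    (congrArg (fun x => a * (c * (a * (B * (a * (c * x)))))) (a1 t)).symm.trans (h45 (A * t))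
  have h47 (t : G) : c * (a * (B * (a * (c * t)))) = A * (b * (A * t)) :=
    (a2 (c * (a * (B * (a * (c * t)))))).symm.trans (congrArg (fun x => A * x) (h46 t))
  have h48 (t : G) : C * (A * (b * (A * t))) = a * (B * (a * (c * t))) :=
    (congrArg (fun x => C * x) (h47 t)).symm.trans (c2 (a * (B * (a * (c * t)))))
  have h49 (t : G) : a * (B * (a * (c * (a * t)))) = C * (A * (b * t)) :=
    (h48 (a * t)).symm.trans (congrArg (fun x => C * (A * (b * x))) (a2 t))
  have h50 (t : G) : A * (C * (A * (b * t))) = B * (a * (c * (a * t))) :=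
    (congrArg (fun x => A * x) (h49 t)).symm.trans (a2 (B * (a * (c * (a * t)))))
  have h51 (t : G) : c * (B * (a * (c * (a * t)))) = b * (b * (a * (a * (b * t)))) := by
    simpa only [h13] using (congrArg (fun x => c * x) (h50 t)).symm.trans (h27 (A * (b * t)))
  have h52 (t : G) : a * (a * (b * (b * (a * (B * t))))) = C * (A * (b * (C * t))) := by
    simpa only [h14, h17] using (congrArg (fun x => a * (B * (a * x))) (h30 t)).symm.trans (h49 (C * t))
  have h53 (t : G) : C * (A * (b * (C * (b * t)))) = a * (a * (b * (b * (a * t)))) :=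
    (h52 (b * t)).symm.trans (congrArg (fun x => a * (a * (b * (b * (a * x))))) (b2 t))
  have h54 (t : G) : b * (b * (a * (a * (b * (A * t))))) = c * (B * (a * (c * t))) :=
    (h51 (A * t)).symm.trans (congrArg (fun x => c * (B * (a * (c * x)))) (a1 t))
  have h55 (t : G) : a * (C * (b * (a * (c * (a * t))))) = c * (B * (a * (C * t))) := by
    simpa only [h2, h32] using (h38 (a * (c * (a * t)))).symm.trans (congrArg (fun x => C * x) (h49 t))
  have h56 (t : G) : C * (b * (a * (c * (a * t)))) = b * (C * (a * (a * (C * t)))) := by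
    simpa only [h25] using (a2 (C * (b * (a * (c * (a * t)))))).symm.trans (congrArg (fun x => A * x) (h55 t))
  have h57 (t : G) : c * (c * (B * (a * (c * (B * t))))) = a * (a * (b * (b * (a * (c * t))))) := by
    simpa only [h29, h6] using (congrArg (fun x => C * (A * (b * x))) (h6 t)).symm.trans (h53 (c * t))
  have h58 (t : G) : C * (b * (a * (a * (b * (b * t))))) = b * (C * (a * (a * (c * (c * t))))) := by
    simpa only [h2] using (congrArg (fun x => C * (b * (a * x))) (h30 t)).symm.trans (h56 (C * t))
  have h59 (t : G) : b * (b * (a * (a * (b * (b * (a * t)))))) = c * (B * (a * (c * (B * t)))) :=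
    (congrArg (fun x => b * (b * (a * (a * (b * x))))) (h8 t)).symm.trans (h54 (B * t))
  have h60 (t : G) : b * (a * (a * (b * (b * (a * (c * (B * t))))))) = C * (b * (C * (A * (b * (C * t))))) := by
    simpa only [h40, h6, h57] using (h58 (a * (B * t))).symm.trans (congrArg (fun x => C * (b * x)) (h52 t))
  have h61 (t : G) : c * (B * (a * (c * (B * (c * (B * t)))))) = b * (C * (b * (C * (A * (b * (C * t)))))) :=
    (h59 (c * (B * t))).symm.trans (congrArg (fun x => b * x) (h60 t))
  have h62 (t : G) : C * (b * (C * (b * (C * (A * (b * (C * t))))))) = B * (a * (c * (B * (c * (B * t))))) :=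
    (congrArg (fun x => C * x) (h61 t)).symm.trans (c2 (B * (a * (c * (B * (c * (B * t)))))))
  have h63 (t : G) : C * (b * (C * (b * (C * (A * (b * t)))))) = B * (a * (c * (B * (c * (B * (c * t)))))) :=
    (congrArg (fun x => C * (b * (C * (b * (C * (A * (b * x))))))) (c2 t)).symm.trans (h62 (c * t))
  have h64 (t : G) : B * (a * (c * (B * (c * (B * (c * (B * t))))))) = C * (b * (C * (b * (C * (A * t))))) :=
    (h63 (B * t)).symm.trans (congrArg (fun x => C * (b * (C * (b * (C * (A * x)))))) (b1 t))
  have h65 (t : G) : a * (c * (B * (c * (B * (c * (B * t)))))) = b * (C * (b * (C * (b * (C * (A * t)))))) :=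
    (b1 (a * (c * (B * (c * (B * (c * (B * t)))))))).symm.trans (congrArg (fun x => b * x) (h64 t))
  have h66 (t : G) : A * (b * (C * (b * (C * (b * (C * (A * t))))))) = c * (B * (c * (B * (c * (B * t))))) :=
    (congrArg (fun x => A * x) (h65 t)).symm.trans (a2 (c * (B * (c * (B * (c * (B * t)))))))
  have h67 (t : G) : A * (b * (C * (b * (C * (b * (C * t)))))) = c * (B * (c * (B * (c * (B * (a * t)))))) :=
    (congrArg (fun x => A * (b * (C * (b * (C * (b * (C * x))))))) (a2 t)).symm.trans (h66 (a * t))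
  refine ⟨fun t => ?_, fun t => ?_, fun t => ?_⟩ <;> simp only [b1, c1, c2, b2, a2, a1, r3, h1, h2, r5, h3, h4, h5, h6, r4, h7, h8, h9, h10, h11, r1, h12, h13, h14, r2, h15, h16, h17, h18, h19, h20, h21, h22, h23, h24, h25, h26, h27, h28, h29, h30, h31, h32, h33, h34, h35, h36, h37, h38, h39, h40, h41, h42, h43, h44, h45, h46, h47, h48, h49, h50, h51, h52, h53, h54, h55, h56, h57, h58, h59, h60, h61, h62, h63, h64, h65, h66, h67]

/-- The conjugation relations for `z` and `w` in `U`. -/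
theorem conj_relations_zw :
    Ua⁻¹ * Uz * Ua = Uz⁻¹ ∧ Ub⁻¹ * Uz * Ub = Uw ∧ Uc⁻¹ * Uz * Uc = Uw ∧
    Ua⁻¹ * Uw * Ua = Uw ∧ Ub⁻¹ * Uw * Ub = Uz⁻¹ ∧ Uc⁻¹ * Uw * Uc = Uz⁻¹ := by
  obtain ⟨f, fa, fb, fc, hf⟩ : ∃ f : FreeGroup (Fin 3) →* UGroup, f (FreeGroup.of 0) = Ua ∧
      f (FreeGroup.of 1) = Ub ∧ f (FreeGroup.of 2) = Uc ∧ ∀ r ∈ Urels, f r = 1 :=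
    ⟨PresentedGroup.mk Urels, rfl, rfl, rfl, fun _ h => PresentedGroup.one_of_mem h⟩
  have key := @zw_words UGroup _ Ua Ua⁻¹ Ub Ub⁻¹ Uc Uc⁻¹
  simp only [mul_inv_cancel_left, inv_mul_cancel_left, implies_true, forall_const] at key
  have hr : ∀ r ∈ Urels, ∀ t, f r * t = t := fun r h t => by rw [hf r h, one_mul]
  simp only [Urels, Set.mem_insert_iff, Set.mem_singleton_iff, forall_eq_or_imp, forall_eq,
    map_mul, map_pow, map_inv, fa, fb, fc, pow_succ, pow_zero, one_mul, mul_assoc] at hr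
  obtain ⟨r1, r2, r3, r4, r5, r6, -, r8, r9⟩ := hr
  replace key := key r1 r2 r3 r4 r5 r6 r8 r9
  obtain ⟨k1, k2, k3⟩ := key
  have ab : Ub * Ua = Ua⁻¹ * Ub⁻¹ := by
    have h' : Ua * Ub * (Ua * Ub) = 1 := by
      simpa only [mul_assoc, mul_one] using r4 1
    calc Ub * Ua = Ua⁻¹ * (Ua * Ub * (Ua * Ub)) * Ub⁻¹ := by group
      _ = _ := by rw [h', mul_one]
  have e1 : Ua⁻¹ * Uz * Ua = Uz⁻¹ := by
    have h := k1 1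
    simp only [Uz, pow_succ, pow_zero, one_mul, mul_inv_rev, inv_inv, mul_assoc, mul_one] at h ⊢
    exact h
  have e2 : Ub⁻¹ * Uz * Ub = Uw := by
    simp only [Uz, Uw, pow_succ, pow_zero]; group
  have e5 : Ub⁻¹ * Uw * Ub = Uz⁻¹ := by
    have h := k2 1
    simp only [Uz, Uw, pow_succ, pow_zero, one_mul, mul_inv_rev, inv_inv, mul_assoc, mul_one] at h ⊢
    exact h
  have e6 : Uc⁻¹ * Uw * Uc = Uz⁻¹ := by
    have h := k3 1
    simp only [Uz, Uw, pow_succ, pow_zero, one_mul, mul_inv_rev, inv_inv, mul_assoc, mul_one] at h ⊢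
    exact h
  refine ⟨e1, e2, by simp only [Uz, Uw, pow_succ]; group, ?_, e5, e6⟩
  have e1' : Ua * Uz * Ua⁻¹ = Uz⁻¹ := by
    have : Uz = (Ua⁻¹ * Uz * Ua)⁻¹ := by rw [e1, inv_inv]
    calc Ua * Uz * Ua⁻¹ = Ua * (Ua⁻¹ * Uz * Ua)⁻¹ * Ua⁻¹ := by rw [← this]
      _ = Uz⁻¹ := by group
  calc Ua⁻¹ * Uw * Ua = (Ub * Ua)⁻¹ * Uz * (Ub * Ua) := by rw [← e2]; group
    _ = Ub * (Ua * Uz * Ua⁻¹) * Ub⁻¹ := by rw [ab]; group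
    _ = Ub * (Ub⁻¹ * Uw * Ub) * Ub⁻¹ := by rw [e1', e5]
    _ = Uw := by group
end

section
/- For every positive integer m, the images ā, b̄, c̄ of a, b, c in H_m = U/K_m satisfy the chiral intersection condition: ⟨ā⟩ ∩ ⟨b̄, c̄⟩ = {1} = ⟨ā, b̄⟩ ∩ ⟨c̄⟩ and ⟨ā, b̄⟩ ∩ ⟨b̄, c̄⟩ = ⟨b̄⟩; moreover, the subgroup ⟨ā, b̄⟩ of H_m has order 128. -/
/-- The subgroup `K_m = ⟨z^m, w^m⟩` of `U`. -/
def UK (m : ℕ) : Subgroup UGroup := Subgroup.closure {Uz ^ m, Uw ^ m}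

/-- The chiral form of the intersection condition for a triple `(t1, t2, t3)` of elements
of a group: `⟨t1⟩ ⊓ ⟨t2, t3⟩ = 1 = ⟨t1, t2⟩ ⊓ ⟨t3⟩` and `⟨t1, t2⟩ ⊓ ⟨t2, t3⟩ = ⟨t2⟩`. -/
def ChiralIC {G : Type*} [Group G] (t1 t2 t3 : G) : Prop :=
  Subgroup.closure {t1} ⊓ Subgroup.closure {t2, t3} = ⊥ ∧
  Subgroup.closure {t1, t2} ⊓ Subgroup.closure {t3} = ⊥ ∧
  Subgroup.closure {t1, t2} ⊓ Subgroup.closure {t2, t3} = Subgroup.closure {t2}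

set_option maxRecDepth 100000

def HPa : Equiv.Perm (Fin 32) where
  toFun := ![4, 0, 28, 24, 5, 1, 29, 25, 6, 2, 30, 26, 7, 3, 31, 27, 20, 16, 12, 8, 21, 17, 13, 9, 22, 18, 14, 10, 23, 19, 15, 11]
  invFun := ![1, 5, 9, 13, 0, 4, 8, 12, 19, 23, 27, 31, 18, 22, 26, 30, 17, 21, 25, 29, 16, 20, 24, 28, 3, 7, 11, 15, 2, 6, 10, 14]
  left_inv := by decide
  right_inv := by decide

def HPb : Equiv.Perm (Fin 32) where
  toFun := ![0, 28, 24, 20, 1, 29, 25, 21, 2, 30, 26, 22, 3, 31, 27, 23, 16, 12, 8, 4, 17, 13, 9, 5, 18, 14, 10, 6, 19, 15, 11, 7]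
  invFun := ![0, 4, 8, 12, 19, 23, 27, 31, 18, 22, 26, 30, 17, 21, 25, 29, 16, 20, 24, 28, 3, 7, 11, 15, 2, 6, 10, 14, 1, 5, 9, 13]
  left_inv := by decide
  right_inv := by decide

def HPc : Equiv.Perm (Fin 32) where
  toFun := ![0, 19, 8, 27, 4, 23, 12, 31, 2, 1, 10, 9, 6, 5, 14, 13, 16, 3, 24, 11, 20, 7, 28, 15, 18, 17, 26, 25, 22, 21, 30, 29]
  invFun := ![0, 9, 8, 17, 4, 13, 12, 21, 2, 11, 10, 19, 6, 15, 14, 23, 16, 25, 24, 1, 20, 29, 28, 5, 18, 27, 26, 3, 22, 31, 30, 7]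
  left_inv := by decide
  right_inv := by decide

def HQa : Equiv.Perm (Fin 16) where
  toFun := ![0, 1, 10, 6, 5, 4, 3, 7, 8, 9, 2, 11, 13, 12, 14, 15]
  invFun := ![0, 1, 10, 6, 5, 4, 3, 7, 8, 9, 2, 11, 13, 12, 14, 15]
  left_inv := by decide
  right_inv := by decide

def HQb : Equiv.Perm (Fin 16) where
  toFun := ![0, 6, 10, 1, 2, 4, 7, 3, 9, 8, 5, 13, 11, 14, 12, 15]
  invFun := ![0, 3, 4, 7, 5, 10, 1, 6, 9, 8, 2, 12, 14, 11, 13, 15]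
  left_inv := by decide
  right_inv := by decide

def HQc : Equiv.Perm (Fin 16) where
  toFun := ![3, 0, 1, 2, 11, 14, 4, 8, 12, 6, 7, 9, 10, 5, 15, 13]
  invFun := ![1, 2, 3, 0, 6, 13, 9, 10, 7, 11, 12, 4, 8, 15, 5, 14]
  left_inv := by decide
  right_inv := by decide

def HPgen : Fin 3 → Equiv.Perm (Fin 32) := ![HPa, HPb, HPc]
def HQgen : Fin 3 → Equiv.Perm (Fin 16) := ![HQa, HQb, HQc]

theorem HP_rels : ∀ r ∈ Urels, FreeGroup.lift HPgen r = 1 := by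
  intro r hr
  simp only [Urels, Set.mem_insert_iff, Set.mem_singleton_iff] at hr
  rcases hr with rfl | rfl | rfl | rfl | rfl | rfl | rfl | rfl | rfl <;>
    simp only [map_mul, map_pow, map_inv, FreeGroup.lift_apply_of] <;>
    (ext x; revert x; decide)

theorem HQ_rels : ∀ r ∈ Urels, FreeGroup.lift HQgen r = 1 := by
  intro r hr
  simp only [Urels, Set.mem_insert_iff, Set.mem_singleton_iff] at hr
  rcases hr with rfl | rfl | rfl | rfl | rfl | rfl | rfl | rfl | rfl <;>
    simp only [map_mul, map_pow, map_inv, FreeGroup.lift_apply_of] <;>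
    (ext x; revert x; decide)

/-- Generic extension of a quotient of `U` killing `z, w` to `U / K_m`. -/
theorem H_hom {L : Type*} [Group L] (g : Fin 3 → L)
    (hg : ∀ r ∈ Urels, FreeGroup.lift g r = 1)
    (hz : (g 1 * (g 2)⁻¹) ^ 4 = 1) (hw : ((g 2)⁻¹ * g 1) ^ 4 = 1)
    (m : ℕ) (hnorm : (UK m).Normal) :
    ∃ φ : UGroup ⧸ UK m →* L, φ (QuotientGroup.mk Ua) = g 0 ∧
      φ (QuotientGroup.mk Ub) = g 1 ∧ φ (QuotientGroup.mk Uc) = g 2 := by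
  let ψ : UGroup →* L := PresentedGroup.toGroup (f := g) hg
  have ha : ψ Ua = g 0 := PresentedGroup.toGroup.of hg
  have hb : ψ Ub = g 1 := PresentedGroup.toGroup.of hg
  have hc : ψ Uc = g 2 := PresentedGroup.toGroup.of hg
  have hK : UK m ≤ ψ.ker := by
    rw [UK, Subgroup.closure_le]
    rintro x (rfl | rfl)
    · simp [Uz, MonoidHom.mem_ker, hb, hc, hz]
    · simp [Uw, MonoidHom.mem_ker, hb, hc, hw]
  exact ⟨QuotientGroup.lift (UK m) ψ hK, ha, hb, hc⟩

theorem U_rel {r : FreeGroup (Fin 3)} (h : r ∈ Urels) : (PresentedGroup.mk Urels r) = 1 :=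
  PresentedGroup.one_of_mem h

/-- normal form in the rotary group of type {4,4}. -/
theorem H_nf {G : Type*} [Group G] (a b : G) (ha : a ^ 4 = 1) (hb : b ^ 4 = 1)
    (hab : (a * b) ^ 2 = 1) (h4 : (a ^ 2 * b ^ 2) ^ 4 = 1) (x : G)
    (hx : x ∈ Subgroup.closure {a, b}) :
    ∃ (i : Fin 8) (j : Fin 4) (k : Fin 4),
      x = (a * b⁻¹) ^ (i : ℕ) * (b * a * b⁻¹ * b⁻¹) ^ (j : ℕ) * b ^ (k : ℕ) := by
  obtain ⟨X, hX⟩ : ∃ X, X = a * b⁻¹ := ⟨_, rfl⟩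
  obtain ⟨Y, hY⟩ : ∃ Y, Y = b * a * b⁻¹ * b⁻¹ := ⟨_, rfl⟩
  rw [← hX, ← hY]
  have haX : a = X * b := by rw [hX]; group
  have e1 : a * b = b⁻¹ * a⁻¹ := by
    rw [pow_two] at hab
    rw [← mul_inv_rev]; exact eq_inv_of_mul_eq_one_left hab
  have e2 : b * a = a⁻¹ * b⁻¹ := by
    have : b * a = b * (a * b) * b⁻¹ := by group
    rw [this, e1]; group
  have b3 : b⁻¹ * b⁻¹ = b * b := by
    have : b * b * (b * b) = 1 := by rw [← hb]; simp only [pow_succ, pow_zero, one_mul, mul_assoc]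
    rw [← mul_inv_rev]; exact (eq_inv_of_mul_eq_one_left this).symm
  have a3 : a⁻¹ * a⁻¹ = a * a := by
    have : a * a * (a * a) = 1 := by rw [← ha]; simp only [pow_succ, pow_zero, one_mul, mul_assoc]
    rw [← mul_inv_rev]; exact (eq_inv_of_mul_eq_one_left this).symm
  have cX : b * X * b⁻¹ = Y := by rw [hX, hY]; group
  have cY : b * Y * b⁻¹ = X⁻¹ := by
    have h1 : b * Y * b⁻¹ = b * (b * a) * (b⁻¹ * b⁻¹) * b⁻¹ := by rw [hY]; group
    have h2 : b * (b * a) * (b⁻¹ * b⁻¹) * b⁻¹ = b * (b * a) * b := by rw [b3]; group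
    have h3 : b * (b * a) * b = b * b * (a * b) := by group
    rw [h1, h2, h3, e1, hX]; group
  have hXY : X * Y = a * a * (b * b) := by
    rw [← b3, hX, hY]; group
  have hYX : Y * X = a * a * (b * b) := by
    have h1 : Y * X = b * a * (b⁻¹ * b⁻¹) * a * b⁻¹ := by rw [hX, hY]; group
    have h2 : b * a * (b * b) * a * b⁻¹ = (b * a) * b * (b * a) * b⁻¹ := by group
    rw [h1, b3, h2, e2, ← b3, ← a3]; group
  have hc : Commute X Y := hXY.trans hYX.symm
  have r1 : X ^ 4 * Y ^ 4 = 1 := by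
    rw [← hc.mul_pow, hXY, ← pow_two, ← pow_two]; exact h4
  have r2 : Y ^ 4 * (X ^ 4)⁻¹ = 1 := by
    have : b * (X ^ 4 * Y ^ 4) * b⁻¹ = (b * X * b⁻¹) ^ 4 * (b * Y * b⁻¹) ^ 4 := by
      rw [conj_pow, conj_pow]; group
    rw [r1, cX, cY, inv_pow] at this
    rw [← this]; group
  have r3 : Y ^ 4 = X ^ 4 := by rw [mul_inv_eq_one] at r2; exact r2
  have r4 : X ^ 8 = 1 := by
    rw [r3] at r1; rw [← r1]; group
  have bX : ∀ n : ℤ, b * X ^ n = Y ^ n * b := by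
    intro n; rw [← cX, conj_zpow]; group
  have bY : ∀ n : ℤ, b * Y ^ n = X ^ (-n) * b := by
    intro n
    have : (X⁻¹) ^ n = X ^ (-n) := by rw [inv_zpow, zpow_neg]
    rw [← this, ← cY, conj_zpow]; group
  have key : ∀ s : G, (∃ i j k : ℤ, s = X ^ i * Y ^ j * b ^ k) →
      ∃ i j k : ℤ, b * s = X ^ i * Y ^ j * b ^ k := by
    rintro s ⟨i, j, k, rfl⟩
    refine ⟨-j, i, 1 + k, ?_⟩
    calc b * (X ^ i * Y ^ j * b ^ k) = (b * X ^ i) * Y ^ j * b ^ k := by group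
      _ = Y ^ i * (b * Y ^ j) * b ^ k := by rw [bX]; group
      _ = (Y ^ i * X ^ (-j)) * (b * b ^ k) := by rw [bY]; group
      _ = _ := by
        rw [((hc.zpow_zpow (-j) i)).eq, zpow_add, zpow_one]
  have keyX : ∀ s : G, (∃ i j k : ℤ, s = X ^ i * Y ^ j * b ^ k) →
      ∃ i j k : ℤ, X * s = X ^ i * Y ^ j * b ^ k := by
    rintro s ⟨i, j, k, rfl⟩
    exact ⟨1 + i, j, k, by rw [zpow_add, zpow_one]; group⟩
  have keyXi : ∀ s : G, (∃ i j k : ℤ, s = X ^ i * Y ^ j * b ^ k) →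
      ∃ i j k : ℤ, X⁻¹ * s = X ^ i * Y ^ j * b ^ k := by
    rintro s ⟨i, j, k, rfl⟩
    exact ⟨-1 + i, j, k, by rw [zpow_add, zpow_neg_one]; group⟩
  have hbi : b⁻¹ = b * b * b := by
    have : b⁻¹ * b ^ 4 = b * b * b := by simp [pow_succ, mul_assoc]
    rw [← this, hb, mul_one]
  have main : ∃ i j k : ℤ, x = X ^ i * Y ^ j * b ^ k := by
    induction hx using Subgroup.closure_induction_left with
    | one => exact ⟨0, 0, 0, by simp⟩
    | mul_left s hs y hy ih =>
      rcases hs with rfl | rfl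
      · rw [haX, mul_assoc]; exact keyX _ (key _ ih)
      · exact key _ ih
    | inv_mul_cancel s hs y hy ih =>
      rcases hs with rfl | rfl
      · rw [haX, mul_inv_rev, hbi]
        have h := key _ (key _ (key _ (keyXi _ ih)))
        simpa only [mul_assoc] using h
      · rw [hbi]
        have h := key _ (key _ (key _ ih))
        simpa only [mul_assoc] using h
  obtain ⟨i, j, k, rfl⟩ := main
  have red : ∀ (g : G) (n : ℕ) (i : ℤ), 0 < n → g ^ n = 1 →
      ∃ t : Fin n, g ^ i = g ^ (t : ℕ) := by
    intro g n i hn hg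
    have hn' : (n : ℤ) ≠ 0 := by omega
    refine ⟨⟨(i % n).toNat, ?_⟩, ?_⟩
    · have := Int.emod_lt_of_pos i (by omega : (0 : ℤ) < n)
      have := Int.emod_nonneg i hn'
      omega
    · rw [← zpow_natCast]
      simp only
      rw [Int.toNat_of_nonneg (Int.emod_nonneg i hn')]
      conv_lhs => rw [← Int.emod_add_mul_ediv i n, zpow_add, zpow_mul, zpow_natCast, hg, one_zpow, mul_one]
  obtain ⟨k', hk⟩ := red b 4 k (by norm_num) hb
  obtain ⟨i', hi⟩ := red X 8 (i + 4 * (j / 4)) (by norm_num) r4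
  refine ⟨i', ⟨(j % 4).toNat, by omega⟩, k', ?_⟩
  have hj : Y ^ j = X ^ (4 * (j / 4)) * Y ^ (j % 4).toNat := by
    conv_lhs => rw [← Int.mul_ediv_add_emod j 4, zpow_add, zpow_mul]
    rw [zpow_mul, show Y ^ (4 : ℤ) = X ^ (4 : ℤ) by exact_mod_cast r3, ← zpow_natCast Y,
      Int.toNat_of_nonneg (by omega)]
  rw [← hk, ← hi, hj, zpow_add, ← mul_assoc]

theorem HP_pos : ∀ (i : Fin 8) (j : Fin 4),
    ((((HPa * HPb⁻¹) ^ (i : ℕ) * (HPb * HPa * HPb⁻¹ * HPb⁻¹) ^ (j : ℕ)) 0 : Fin 32) : ℕ)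
      = 4 * i + j := by decide

theorem HP_b : ∀ k k' : Fin 4, (HPb ^ (k : ℕ)) 4 = (HPb ^ (k' : ℕ)) 4 → k = k' := by decide

theorem HP_fix (k : ℕ) : (HPb ^ k) 0 = 0 := by
  induction k with
  | zero => rfl
  | succ n ih => rw [pow_succ, Equiv.Perm.mul_apply, show HPb 0 = 0 by decide, ih]

theorem HP_zw : (HPb * HPc⁻¹) ^ 4 = 1 ∧ (HPc⁻¹ * HPb) ^ 4 = 1 := by
  constructor <;> (ext x; revert x; decide)
theorem HQ_zw : (HQb * HQc⁻¹) ^ 4 = 1 ∧ (HQc⁻¹ * HQb) ^ 4 = 1 := by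
  constructor <;> (ext x; revert x; decide)

theorem H_closure_fix {G : Type*} [Group G] {n : ℕ} (φ : G →* Equiv.Perm (Fin n)) (p : Fin n)
    (s t : G) (hs : φ s p = p) (ht : φ t p = p) (x : G) (hx : x ∈ Subgroup.closure {s, t}) :
    φ x p = p := by
  have : Subgroup.closure {s, t} ≤ (MulAction.stabilizer (Equiv.Perm (Fin n)) p).comap φ := by
    rw [Subgroup.closure_le]
    rintro y (rfl | rfl)
    · exact hs
    · exact ht
  exact this hx

/-- The abstract argument. -/
theorem H_main {G : Type*} [Group G] (a b c : G) (ha : a ^ 4 = 1) (hb : b ^ 4 = 1)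
    (hc : c ^ 4 = 1)
    (hab : (a * b) ^ 2 = 1) (h4 : (a ^ 2 * b ^ 2) ^ 4 = 1)
    (φ : G →* Equiv.Perm (Fin 32)) (φa : φ a = HPa) (φb : φ b = HPb) (φc : φ c = HPc)
    (θ : G →* Equiv.Perm (Fin 16)) (θa : θ a = HQa) (θb : θ b = HQb) (θc : θ c = HQc) :
    ChiralIC a b c ∧ Nat.card (Subgroup.closure {a, b}) = 128 := by
  have nf := H_nf a b ha hb hab h4
  have pos : ∀ (i : Fin 8) (j k : Fin 4),
      ((φ ((a * b⁻¹) ^ (i : ℕ) * (b * a * b⁻¹ * b⁻¹) ^ (j : ℕ) * b ^ (k : ℕ)) 0 : Fin 32) : ℕ)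
        = 4 * i + j := by
    intro i j k
    rw [map_mul, map_pow φ b, φb, Equiv.Perm.mul_apply, HP_fix, ← HP_pos]
    simp only [map_mul, map_pow, map_inv, φa, φb]
  have hbc : ∀ x ∈ Subgroup.closure {b, c}, φ x 0 = 0 :=
    H_closure_fix φ 0 b c (by rw [φb]; decide) (by rw [φc]; decide)
  have habf : ∀ x ∈ Subgroup.closure {a, b}, θ x 0 = 0 :=
    H_closure_fix θ 0 a b (by rw [θa]; decide) (by rw [θb]; decide)
  have third : ∀ x ∈ Subgroup.closure {a, b}, φ x 0 = 0 → ∃ k : Fin 4, x = b ^ (k : ℕ) := by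
    intro x hx h0
    obtain ⟨i, j, k, rfl⟩ := nf x hx
    have := pos i j k
    rw [h0] at this
    simp only [Fin.val_zero] at this
    refine ⟨k, ?_⟩
    rw [show (i : ℕ) = 0 by omega, show (j : ℕ) = 0 by omega]; simp
  have am : a ∈ Subgroup.closure {a, b} := Subgroup.subset_closure (by simp)
  have bm : b ∈ Subgroup.closure {a, b} := Subgroup.subset_closure (by simp)
  have bm' : b ∈ Subgroup.closure {b, c} := Subgroup.subset_closure (by simp)
  have red : ∀ (g : G) (i : ℤ), g ^ 4 = 1 → ∃ t : Fin 4, g ^ i = g ^ (t : ℕ) := by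
    intro g i hg
    refine ⟨⟨(i % 4).toNat, by omega⟩, ?_⟩
    rw [← zpow_natCast]
    simp only
    rw [Int.toNat_of_nonneg (by omega)]
    conv_lhs => rw [← Int.emod_add_mul_ediv i 4, zpow_add, zpow_mul]
    rw [show g ^ (4 : ℤ) = 1 by exact_mod_cast hg, one_zpow, mul_one]
  refine ⟨⟨?_, ?_, ?_⟩, ?_⟩
  · rw [eq_bot_iff]
    rintro x ⟨h1, h2⟩
    obtain ⟨n, rfl⟩ := Subgroup.mem_closure_singleton.1 h1
    obtain ⟨t, ht⟩ := red a n ha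
    have h0 := hbc _ h2
    simp only [ht, map_pow, φa] at h0
    have : ∀ t : Fin 4, (HPa ^ (t : ℕ)) 0 = 0 → t = 0 := by decide
    rw [ht, this t h0]; simp
  · rw [eq_bot_iff]
    rintro x ⟨h2, h1⟩
    obtain ⟨n, rfl⟩ := Subgroup.mem_closure_singleton.1 h1
    obtain ⟨t, ht⟩ := red c n hc
    have h0 := habf _ h2
    simp only [ht, map_pow, θc] at h0
    have : ∀ t : Fin 4, (HQc ^ (t : ℕ)) 0 = 0 → t = 0 := by decide
    rw [ht, this t h0]; simp
  · apply le_antisymm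
    · rintro x ⟨h1, h2⟩
      obtain ⟨k, rfl⟩ := third x h1 (hbc x h2)
      exact Subgroup.pow_mem _ (Subgroup.subset_closure (by simp)) _
    · rw [Subgroup.closure_le]
      rintro x rfl
      exact ⟨bm, bm'⟩
  · let f : Fin 8 × Fin 4 × Fin 4 → Subgroup.closure {a, b} := fun p =>
      ⟨(a * b⁻¹) ^ (p.1 : ℕ) * (b * a * b⁻¹ * b⁻¹) ^ (p.2.1 : ℕ) * b ^ (p.2.2 : ℕ), by
        refine mul_mem (mul_mem (pow_mem ?_ _) (pow_mem ?_ _)) (pow_mem bm _)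
        · exact mul_mem am (inv_mem bm)
        · exact mul_mem (mul_mem (mul_mem bm am) (inv_mem bm)) (inv_mem bm)⟩
    have hf : Function.Bijective f := by
      constructor
      · rintro ⟨i, j, k⟩ ⟨i', j', k'⟩ h
        have h := congrArg Subtype.val h
        simp only [f] at h
        have e1 := pos i j k
        rw [h, pos i' j' k'] at e1
        obtain rfl : i = i' := by ext; omega
        obtain rfl : j = j' := by ext; omega
        have h := mul_left_cancel h
        have h := congrArg (fun x => φ x 4) h
        simp only [map_pow, φb] at h
        rw [HP_b k k' h]
      · rintro ⟨x, hx⟩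
        obtain ⟨i, j, k, rfl⟩ := nf x hx
        exact ⟨(i, j, k), rfl⟩
    rw [← Nat.card_eq_of_bijective f hf]
    simp

theorem Hm_chiral_intersection (m : ℕ) (hm : 0 < m) (hnorm : (UK m).Normal) :
    haveI := hnorm
    ChiralIC (QuotientGroup.mk Ua : UGroup ⧸ UK m)
      (QuotientGroup.mk Ub : UGroup ⧸ UK m)
      (QuotientGroup.mk Uc : UGroup ⧸ UK m) ∧
    Nat.card (Subgroup.closure {(QuotientGroup.mk Ua : UGroup ⧸ UK m),
      (QuotientGroup.mk Ub : UGroup ⧸ UK m)}) = 128 := by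
  haveI := hnorm
  obtain ⟨φ, φa, φb, φc⟩ := H_hom HPgen HP_rels HP_zw.1 HP_zw.2 m hnorm
  obtain ⟨θ, θa, θb, θc⟩ := H_hom HQgen HQ_rels HQ_zw.1 HQ_zw.2 m hnorm
  have ra : Ua ^ 4 = 1 :=
    U_rel (r := FreeGroup.of 0 ^ 4) (by simp [Urels])
  have rb : Ub ^ 4 = 1 :=
    U_rel (r := FreeGroup.of 1 ^ 4) (by simp [Urels])
  have rc : Uc ^ 4 = 1 :=
    U_rel (r := FreeGroup.of 2 ^ 4) (by simp [Urels])
  have rab : (Ua * Ub) ^ 2 = 1 :=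
    U_rel (r := (FreeGroup.of 0 * FreeGroup.of 1) ^ 2) (by simp [Urels])
  have r4 : (Ua ^ 2 * Ub ^ 2) ^ 4 = 1 :=
    U_rel (r := (FreeGroup.of 0 ^ 2 * FreeGroup.of 1 ^ 2) ^ 4) (by simp [Urels])
  let π := QuotientGroup.mk' (UK m)
  exact H_main (π Ua) (π Ub) (π Uc)
    (by rw [← map_pow, ra, map_one]) (by rw [← map_pow, rb, map_one])
    (by rw [← map_pow, rc, map_one]) (by rw [← map_mul, ← map_pow, rab, map_one])
    (by rw [← map_pow, ← map_pow, ← map_mul, ← map_pow, r4, map_one])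
    φ φa φb φc θ θa θb θc
end
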